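/- arXiv:1410.1294 — 2 statements merged into one kernel-verified Lean document; each statement's English description precedes it below -/
import Mathlib

section
/- Let X be a complex Hilbert space, let T ∈ B(X) be a contraction (‖T‖ ≤ 1), let Λ := σ(T) ∩ 𝕋, and let a ∈ ℓ¹(ℕ). Suppose there is a constant α ≥ 1 such that for every c ∈ ℓ¹(ℤ) one has inf{ ‖c − b‖_{ℓ¹(ℤ)} : b ∈ K_Λ } ≤ α · sup{ |ĉ(λ)| : λ ∈ Λ } (i.e. Λ is a Helson set with Helson constant at most α). Then sup{ |â(λ)| : λ ∈ Λ } ≤ limsup_{n→∞} ‖Tⁿ â(T)‖ ≤ liminf/limsup agree and, moreover, limsup_{n→∞} ‖Tⁿ â(T)‖ ≤ α · sup{ |â(λ)| : λ ∈ Λ }; in particular sup_{λ∈Λ}|â(λ)| ≤ ‖Tⁿ â(T)‖ for every n, and limsup_n ‖Tⁿ â(T)‖ ≤ α·sup_{λ∈Λ}|â(λ)|. (ℤ₊-instance of Corollary 4.3 of the paper.) -/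
open Filter Topology

open Polynomial
open scoped Ring

/-!
A strict contraction `T` lies on Harris' holomorphic family `F`, with `F 0 = T` and `F z` unitary
for `|z| = 1`; the maximum principle applied to `p ∘ F` gives von Neumann's inequality.

Consequently `‖Tⁿ f(T)‖` decreases to a quantity that depends on `f` only, extends to a
seminorm on all of `C(𝕋)`, and is invariant under multiplication by `λ`. Its null space is a
closed ideal of `C(𝕋)`. If `μ ∈ 𝕋` is not in the spectrum, the resolvent bounds the seminorm of
`h` by that of `(μ - λ) h`; iterating this for `h` supported near `μ` shows that `h` is null. So
the null ideal contains every function vanishing on `σ(T) ∩ 𝕋`, and by Tietze extension the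
seminorm of `f` is at most `sup |f|` over `σ(T) ∩ 𝕋`. The reverse inequality is the spectral
mapping theorem.
-/

local notation "𝕋" => Metric.sphere (0 : ℂ) 1

/-- The coordinate function `λ ↦ λ` on the unit circle. -/
noncomputable def circleCoord : C(𝕋, ℂ) :=
  .restrict _ (.id ℂ)

lemma circleCoord_apply (x : 𝕋) : circleCoord x = x := rfl

lemma aeval_circleCoord_apply (p : ℂ[X]) (x : 𝕋) : aeval circleCoord p x = p.eval (x : ℂ) :=
  aeval_continuousMap_apply p circleCoord x

/-- `T` satisfies von Neumann's inequality `‖p(T)‖ ≤ sup_{|λ| = 1} |p(λ)|` for every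
polynomial `p`. -/
def IsPolynomiallyContractive {A : Type*} [NormedRing A] [NormedAlgebra ℂ A] (T : A) : Prop :=
  ∀ p : ℂ[X], ‖aeval T p‖ ≤ ‖aeval circleCoord p‖

section VonNeumann

variable {A : Type*} [CStarAlgebra A]

lemma isPolynomiallyContractive_of_mem_unitary {U : A} (hU : U ∈ unitary A) :
    IsPolynomiallyContractive U := by
  intro p
  have : IsStarNormal U := isStarNormal_of_mem_unitary hU
  rw [← cfc_polynomial p U]
  refine norm_cfc_le (norm_nonneg _) fun z hz ↦ ?_
  have hz' := spectrum.subset_circle_of_unitary hU hz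
  simpa only [aeval_circleCoord_apply] using (aeval circleCoord p).norm_coe_le_norm ⟨z, hz'⟩

lemma isUnit_one_sub_self_mul_star {T : A} (hT : ‖T‖ < 1) : IsUnit (1 - T * star T) := by
  refine isUnit_one_sub_of_norm_lt_one ?_
  rw [CStarRing.norm_self_mul_star]
  exact mul_lt_one_of_nonneg_of_lt_one_left (norm_nonneg T) hT hT.le

lemma isUnit_one_add_smul {A : Type*} [NormedRing A] [NormedAlgebra ℂ A] [CompleteSpace A]
    {S : A} (hS : ‖S‖ < 1) {z : ℂ} (hz : ‖z‖ ≤ 1) :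
    IsUnit (1 + z • S) := by
  rw [← sub_neg_eq_add]
  refine isUnit_one_sub_of_norm_lt_one ?_
  rw [norm_neg, norm_smul]
  exact mul_lt_one_of_nonneg_of_lt_one_right hz (norm_nonneg S) hS

lemma mul_inv_mul_one_sub_mul_inv_mul {R : Type*} [Ring R] (u v : Rˣ) :
    (u : R) * ↑v⁻¹ * (1 - (v - 1) * (u - 1)) * ↑u⁻¹ * v = 1 - (u - 1) * (v - 1) := by
  have hexpand : (1 - (v - 1) * (u - 1) : R) = v + u - v * u := by noncomm_ring
  rw [hexpand, mul_sub, mul_add, sub_mul, add_mul, sub_mul, add_mul]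
  simp only [mul_assoc, Units.inv_mul_cancel_left, Units.inv_mul,
    Units.mul_inv, mul_one]
  noncomm_ring

lemma mem_unitary_of_defect {A : Type*} [Ring A] [StarRing A] {S : A} {d e u : Aˣ}
    (hd : star d = d) (he : star e = e)
    (hdd : (d * d : A) = 1 - star S * S) (hee : (e * e : A) = 1 - S * star S)
    (hu : (u : A) = 1 + S) : (↑(e⁻¹ * u * (star u)⁻¹ * d) : A) ∈ unitary A := by
  have hS : S = u - 1 := by rw [hu, add_sub_cancel_left]
  have hdefect : u * (star u)⁻¹ * (d * d) * u⁻¹ * star u = e * e := Units.ext <| by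
    simpa [hS, hdd, hee] using mul_inv_mul_one_sub_mul_inv_mul u (star u)
  refine (Units.isUnit _).mem_unitary_of_mul_star_self ?_
  rw [← Units.coe_star, ← Units.val_mul, Units.val_eq_one]
  calc e⁻¹ * u * (star u)⁻¹ * d * star (e⁻¹ * u * (star u)⁻¹ * d)
    _ = e⁻¹ * (u * (star u)⁻¹ * (d * d) * u⁻¹ * star u) * e⁻¹ := by
      simp only [star_mul, star_inv, star_star, hd, he, mul_assoc]
    _ = 1 := by rw [hdefect, inv_mul_cancel_left, mul_inv_cancel]

section Order

variable [PartialOrder A] [StarOrderedRing A]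

lemma semiconjBy_sqrt {x a b : A} (ha : 0 ≤ a) (hb : 0 ≤ b) (hb' : IsUnit b)
    (h : SemiconjBy x a b) : SemiconjBy x (CFC.sqrt a) (CFC.sqrt b) := by
  set s := CFC.sqrt a
  set t := CFC.sqrt b
  have hs : 0 ≤ s := CFC.sqrt_nonneg a
  have ht : 0 ≤ t := CFC.sqrt_nonneg b
  -- `y` solves the Sylvester equation `t * y + y * s = 0`, whose only solution is `0`.
  set y := x * s - t * x with hy
  have hsylvester : t * y = -(y * s) := by
    have hss : x * (s * s) = t * t * x := by
      rw [CFC.sqrt_mul_sqrt_self a, CFC.sqrt_mul_sqrt_self b, h.eq]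
    rw [hy, mul_sub, sub_mul, mul_assoc x, hss]
    noncomm_ring
  have hneg : t * (y * star y) = -(y * s * star y) := by
    rw [← mul_assoc, hsylvester, neg_mul]
  have hpos : 0 ≤ y * s * star y := star_right_conjugate_nonneg hs y
  have hcomm : Commute t (y * star y) := by
    refine (ht.isSelfAdjoint.commute_iff (.mul_star_self y)).2 ?_
    rw [hneg]
    exact hpos.isSelfAdjoint.neg
  have hzero : t * (y * star y) = 0 :=
    le_antisymm (hneg ▸ neg_nonpos.2 hpos) (hcomm.mul_nonneg ht (mul_star_self_nonneg y))
  have hy0 : y = 0 := CStarRing.mul_star_self_eq_zero_iff y |>.1 <|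
    ((CFC.isUnit_sqrt_iff b).2 hb').mul_right_eq_zero.1 hzero
  exact sub_eq_zero.1 hy0

/-- Harris' operator-valued Möbius transformation: a holomorphic family through `T` at `z = 0`
that takes unitary values on the unit circle when `‖T‖ < 1`. The inverses are `Ring.inverse`,
hence `0` at a non-unit. -/
noncomputable def harrisMap (T : A) (z : ℂ) : A :=
  (CFC.sqrt (1 - T * star T))⁻¹ʳ * (z • 1 + T) * (1 + z • star T)⁻¹ʳ * CFC.sqrt (1 - star T * T)

lemma one_sub_star_mul_self_nonneg {T : A} (hT : ‖T‖ ≤ 1) : 0 ≤ 1 - star T * T := by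
  rw [sub_nonneg, ← CStarAlgebra.norm_le_one_iff_of_nonneg _ (star_mul_self_nonneg T),
    CStarRing.norm_star_mul_self]
  exact mul_le_one₀ hT (norm_nonneg T) hT

lemma one_sub_self_mul_star_nonneg {T : A} (hT : ‖T‖ ≤ 1) : 0 ≤ 1 - T * star T := by
  simpa only [star_star] using one_sub_star_mul_self_nonneg ((norm_star T).trans_le hT)

lemma harrisMap_zero {T : A} (hT : ‖T‖ < 1) : harrisMap T 0 = T := by
  have hunit := isUnit_one_sub_self_mul_star hT
  have hnonneg := one_sub_self_mul_star_nonneg hT.le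
  have hintertwine : SemiconjBy T (1 - star T * T) (1 - T * star T) := by
    simp only [SemiconjBy, mul_sub, sub_mul, mul_one, one_mul, mul_assoc]
  have hsqrt := semiconjBy_sqrt (one_sub_star_mul_self_nonneg hT.le) hnonneg hunit hintertwine
  simp only [harrisMap, zero_smul, zero_add, add_zero, Ring.inverse_one, mul_one]
  rw [mul_assoc, hsqrt.eq, Ring.inverse_mul_cancel_left _ _ ((CFC.isUnit_sqrt_iff _).2 hunit)]

lemma harrisMap_mem_unitary {T : A} (hT : ‖T‖ < 1) {z : ℂ} (hz : ‖z‖ = 1) :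
    harrisMap T z ∈ unitary A := by
  have hzz : z * star z = 1 := by simp [Complex.mul_conj, Complex.normSq_eq_norm_sq, hz]
  have hnonneg := one_sub_star_mul_self_nonneg hT.le
  have hnonneg' := one_sub_self_mul_star_nonneg hT.le
  obtain ⟨u, hu⟩ := isUnit_one_add_smul hT (z := star z) (by simp [hz])
  obtain ⟨e, he⟩ := (CFC.isUnit_sqrt_iff _).2 (isUnit_one_sub_self_mul_star hT)
  obtain ⟨d, hd⟩ : IsUnit (CFC.sqrt (1 - star T * T)) := (CFC.isUnit_sqrt_iff _).2 <| by
    simpa only [star_star] using isUnit_one_sub_self_mul_star ((norm_star T).trans_lt hT)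
  have hmap : harrisMap T z = z • ↑(e⁻¹ * u * (star u)⁻¹ * d) := by
    have hv : 1 + z • star T = ↑(star u) := by simp [hu]
    have hzu : z • 1 + T = z • (u : A) := by rw [hu, smul_add, smul_smul, hzz, one_smul]
    simp only [harrisMap, ← he, ← hd, hv, hzu, Ring.inverse_unit, mul_smul_comm, smul_mul_assoc,
      Units.val_mul]
  rw [hmap]
  refine Unitary.smul_mem_of_mem (Unitary.mem_iff_self_mul_star.2 hzz) ?_
  refine mem_unitary_of_defect (Units.ext ?_) (Units.ext ?_) ?_ ?_ hu
  · rw [Units.coe_star, hd, (CFC.sqrt_nonneg _).star_eq]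
  · rw [Units.coe_star, he, (CFC.sqrt_nonneg _).star_eq]
  · rw [hd, CFC.sqrt_mul_sqrt_self _, star_smul, smul_mul_smul_comm, star_star, hzz, one_smul]
  · rw [he, CFC.sqrt_mul_sqrt_self _, star_smul, smul_mul_smul_comm, star_star, mul_comm, hzz,
      one_smul]

lemma differentiableAt_harrisMap {T : A} (hT : ‖T‖ < 1) {z : ℂ} (hz : ‖z‖ ≤ 1) :
    DifferentiableAt ℂ (harrisMap T) z := by
  have hinv : DifferentiableAt ℂ (fun w : ℂ ↦ (1 + w • star T)⁻¹ʳ) z :=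
    DifferentiableAt.comp (g := Ring.inverse) z
      (differentiableAt_inverse (isUnit_one_add_smul ((norm_star T).trans_lt hT) hz))
      (by fun_prop)
  have hid : DifferentiableAt ℂ (fun w : ℂ ↦ w • (1 : A) + T) z := by fun_prop
  exact ((hid.const_mul _).mul hinv).mul_const _

end Order

lemma differentiable_aeval {A : Type*} [NormedRing A] [NormedAlgebra ℂ A] (p : ℂ[X]) :
    Differentiable ℂ fun a : A ↦ aeval a p := by
  simp only [aeval_eq_sum_range]
  fun_prop

lemma isPolynomiallyContractive_of_norm_lt_one {T : A} (hT : ‖T‖ < 1) :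
    IsPolynomiallyContractive T := by
  let _ := CStarAlgebra.spectralOrder A
  let _ := CStarAlgebra.spectralOrderedRing A
  intro p
  have hdiff : DifferentiableOn ℂ (fun z ↦ aeval (harrisMap T z) p) (Metric.closedBall 0 1) :=
    (differentiable_aeval p).comp_differentiableOn (g := fun a : A ↦ aeval a p) fun z hz ↦
      (differentiableAt_harrisMap hT (mem_closedBall_zero_iff.1 hz)).differentiableWithinAt
  have hmax := Complex.norm_le_of_forall_mem_frontier_norm_le Metric.isBounded_ball
    (hdiff.diffContOnCl_ball subset_rfl) (C := ‖aeval circleCoord p‖) (fun z hz ↦ ?_)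
    (subset_closure (Metric.mem_ball_self one_pos))
  · simpa only [harrisMap_zero hT] using hmax
  · rw [frontier_ball _ one_ne_zero, mem_sphere_zero_iff_norm] at hz
    exact isPolynomiallyContractive_of_mem_unitary (harrisMap_mem_unitary hT hz) p

theorem isPolynomiallyContractive_of_norm_le_one {T : A} (hT : ‖T‖ ≤ 1) :
    IsPolynomiallyContractive T := by
  intro p
  have hlim : Tendsto (fun r : ℝ ↦ ‖aeval (r • T) p‖) (𝓝[<] 1) (𝓝 ‖aeval T p‖) := by
    have hcont : Continuous fun r : ℝ ↦ ‖aeval (r • T) p‖ :=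
      (p.continuous_aeval.comp (by fun_prop)).norm
    simpa using (hcont.tendsto 1).mono_left nhdsWithin_le_nhds
  refine le_of_tendsto hlim ?_
  filter_upwards [Ioo_mem_nhdsLT one_pos] with r hr
  refine isPolynomiallyContractive_of_norm_lt_one ?_ p
  rw [norm_smul, Real.norm_of_nonneg hr.1.le]
  exact mul_lt_one_of_nonneg_of_lt_one_left hr.1.le hr.2 hT

end VonNeumann

section CircleCoordinate

lemma star_circleCoord_mul_self : star circleCoord * circleCoord = 1 := by
  ext x
  simp [circleCoord_apply, Complex.conj_mul']

lemma circleCoord_pow_mem_unitary (N : ℕ) : circleCoord ^ N ∈ unitary C(𝕋, ℂ) :=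
  pow_mem (Unitary.mem_iff_star_mul_self.2 star_circleCoord_mul_self) N

lemma norm_circleCoord_pow_mul (N : ℕ) (h : C(𝕋, ℂ)) : ‖circleCoord ^ N * h‖ = ‖h‖ :=
  CStarRing.norm_mem_unitary_mul h (circleCoord_pow_mem_unitary N)

lemma dense_laurentPolynomials :
    Dense {h : C(𝕋, ℂ) |
      ∃ (N : ℕ) (p : ℂ[X]), circleCoord ^ N * h = aeval circleCoord p} := by
  intro h
  induction h using ContinuousMap.induction_on_of_compact with
  | const c => exact subset_closure ⟨0, C c, by ext; simp⟩
  | id => exact subset_closure ⟨0, X, by simp [circleCoord]⟩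
  | star_id =>
    refine subset_closure ⟨1, 1, ?_⟩
    rw [pow_one, map_one, mul_comm]
    exact star_circleCoord_mul_self
  | add f g hf hg =>
    refine map_mem_closure₂ continuous_add hf hg ?_
    rintro f ⟨N, p, hp⟩ g ⟨M, q, hq⟩
    refine ⟨N + M, X ^ M * p + X ^ N * q, ?_⟩
    simp only [map_add, map_mul, map_pow, aeval_X, ← hp, ← hq]
    ring
  | mul f g hf hg =>
    refine map_mem_closure₂ continuous_mul hf hg ?_
    rintro f ⟨N, p, hp⟩ g ⟨M, q, hq⟩
    refine ⟨N + M, p * q, ?_⟩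
    simp only [map_mul, ← hp, ← hq]
    ring
  | frequently f hf => exact isClosed_closure.mem_of_frequently_of_tendsto hf tendsto_id

end CircleCoordinate

namespace IsPolynomiallyContractive

variable {A : Type*} [NormedRing A] [NormedAlgebra ℂ A] {T : A}

lemma norm_pow_mul_le (hT : IsPolynomiallyContractive T) (n : ℕ) (S : A) :
    ‖T ^ n * S‖ ≤ ‖S‖ := by
  have hpow : ‖T ^ n‖ ≤ 1 := by
    have hcoord : ‖circleCoord ^ n‖ = 1 := by
      rw [← mul_one (circleCoord ^ n), norm_circleCoord_pow_mul, norm_one]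
    simpa only [map_pow, aeval_X, hcoord] using hT (X ^ n)
  exact (norm_mul_le _ _).trans (mul_le_of_le_one_left (norm_nonneg S) hpow)

lemma norm_one_le (hT : IsPolynomiallyContractive T) : ‖(1 : A)‖ ≤ 1 := by
  simpa only [map_one, norm_one] using hT 1

lemma antitone_norm_pow_mul (hT : IsPolynomiallyContractive T) (S : A) :
    Antitone fun n ↦ ‖T ^ n * S‖ :=
  antitone_nat_of_succ_le fun n ↦ by
    simpa only [pow_succ', pow_zero, mul_one, mul_assoc] using hT.norm_pow_mul_le 1 (T ^ n * S)

end IsPolynomiallyContractive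

section ApproximationCost

variable {A : Type*} [NormedRing A] [NormedAlgebra ℂ A]

/-- The cost of the polynomial `p` as an approximation at stage `N`: how far `p` is from
`λᴺ h` uniformly on the circle, plus the size of `p(T)` after `N` further applications of `T`. -/
noncomputable def approximationCost (T : A) (h : C(𝕋, ℂ)) (N : ℕ) (p : ℂ[X]) : ℝ :=
  ‖circleCoord ^ N * h - aeval circleCoord p‖ + ‖T ^ N * aeval T p‖

lemma approximationCost_nonneg (T : A) (h : C(𝕋, ℂ)) (N : ℕ)
    (p : ℂ[X]) : 0 ≤ approximationCost T h N p := by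
  unfold approximationCost
  positivity

lemma bddBelow_range_approximationCost (T : A) (h : C(𝕋, ℂ)) :
    BddBelow (Set.range fun i : ℕ × ℂ[X] ↦ approximationCost T h i.1 i.2) :=
  ⟨0, Set.forall_mem_range.2 fun i ↦ approximationCost_nonneg T h i.1 i.2⟩

lemma approximationCost_smul (T : A) (c : ℂ) (h : C(𝕋, ℂ)) (N : ℕ)
    (p : ℂ[X]) : approximationCost T (c • h) N (c • p) = ‖c‖ * approximationCost T h N p := by
  simp only [approximationCost, map_smul, mul_smul_comm, ← smul_sub, norm_smul, mul_add]

end ApproximationCost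

namespace IsPolynomiallyContractive

variable {A : Type*} [NormedRing A] [NormedAlgebra ℂ A] {T : A}

lemma approximationCost_add_le (hT : IsPolynomiallyContractive T)
    (f g : C(𝕋, ℂ)) (N M : ℕ) (p q : ℂ[X]) :
    approximationCost T (f + g) (N + M) (X ^ M * p + X ^ N * q) ≤
      approximationCost T f N p + approximationCost T g M q := by
  have hfun : circleCoord ^ (N + M) * (f + g) - aeval circleCoord (X ^ M * p + X ^ N * q) =
      circleCoord ^ M * (circleCoord ^ N * f - aeval circleCoord p) +
        circleCoord ^ N * (circleCoord ^ M * g - aeval circleCoord q) := by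
    simp only [map_add, map_mul, map_pow, aeval_X]
    ring
  have hop : T ^ (N + M) * aeval T (X ^ M * p + X ^ N * q) =
      T ^ (M + M) * (T ^ N * aeval T p) + T ^ (N + N) * (T ^ M * aeval T q) := by
    have hpoly : X ^ (N + M) * (X ^ M * p + X ^ N * q) =
        X ^ (M + M) * (X ^ N * p) + X ^ (N + N) * (X ^ M * q) := by ring
    simpa only [map_add, map_mul, map_pow, aeval_X] using congrArg (aeval T) hpoly
  calc approximationCost T (f + g) (N + M) (X ^ M * p + X ^ N * q)
    _ ≤ (‖circleCoord ^ N * f - aeval circleCoord p‖ +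
          ‖circleCoord ^ M * g - aeval circleCoord q‖) +
        (‖T ^ N * aeval T p‖ + ‖T ^ M * aeval T q‖) := by
      rw [approximationCost, hfun, hop]
      refine add_le_add ((norm_add_le _ _).trans_eq ?_) ((norm_add_le _ _).trans ?_)
      · simp only [norm_circleCoord_pow_mul]
      · exact add_le_add (hT.norm_pow_mul_le _ _) (hT.norm_pow_mul_le _ _)
    _ = approximationCost T f N p + approximationCost T g M q := by
      simp only [approximationCost]
      ring

/-- The infimum over all stages and polynomials of the approximation cost of `h`. It plays the
role of `lim ‖Tⁿ h(T)‖`, but makes sense for every continuous `h`, for which `h(T)` need not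
exist. -/
noncomputable def asymptoticSeminorm (hT : IsPolynomiallyContractive T) : Seminorm ℂ C(𝕋, ℂ) :=
  .ofSMulLE (fun h ↦ ⨅ i : ℕ × ℂ[X], approximationCost T h i.1 i.2)
    (le_antisymm
      ((ciInf_le (bddBelow_range_approximationCost T 0) (0, 0)).trans_eq
        (by simp [approximationCost]))
      (le_ciInf fun i ↦ approximationCost_nonneg T 0 i.1 i.2))
    (fun f g ↦ le_ciInf_add_ciInf fun i j ↦
      (ciInf_le (bddBelow_range_approximationCost T (f + g)) (i.1 + j.1, _)).trans
        (hT.approximationCost_add_le f g i.1 j.1 i.2 j.2))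
    (fun c h ↦ by
      rw [Real.mul_iInf_of_nonneg (norm_nonneg c)]
      exact le_ciInf fun i ↦
        (ciInf_le (bddBelow_range_approximationCost T (c • h)) (i.1, c • i.2)).trans_eq
          (approximationCost_smul T c h i.1 i.2))

lemma asymptoticSeminorm_le (hT : IsPolynomiallyContractive T) (h : C(𝕋, ℂ)) (N : ℕ) (p : ℂ[X]) :
    hT.asymptoticSeminorm h ≤
      ‖circleCoord ^ N * h - aeval circleCoord p‖ + ‖T ^ N * aeval T p‖ :=
  ciInf_le (bddBelow_range_approximationCost T h) (N, p)

lemma le_asymptoticSeminorm (hT : IsPolynomiallyContractive T) {h : C(𝕋, ℂ)} {c : ℝ}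
    (hc : ∀ (N : ℕ) (p : ℂ[X]),
      c ≤ ‖circleCoord ^ N * h - aeval circleCoord p‖ + ‖T ^ N * aeval T p‖) :
    c ≤ hT.asymptoticSeminorm h :=
  le_ciInf fun i : ℕ × ℂ[X] ↦ hc i.1 i.2

lemma asymptoticSeminorm_le_norm (hT : IsPolynomiallyContractive T)
    (h : C(𝕋, ℂ)) : hT.asymptoticSeminorm h ≤ ‖h‖ := by
  simpa using hT.asymptoticSeminorm_le h 0 0

lemma continuous_asymptoticSeminorm (hT : IsPolynomiallyContractive T) :
    Continuous hT.asymptoticSeminorm :=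
  Seminorm.continuous_of_le (q := normSeminorm ℂ _) continuous_norm hT.asymptoticSeminorm_le_norm

lemma asymptoticSeminorm_circleCoord_mul_le (hT : IsPolynomiallyContractive T) (h : C(𝕋, ℂ)) :
    hT.asymptoticSeminorm (circleCoord * h) ≤ hT.asymptoticSeminorm h := by
  refine hT.le_asymptoticSeminorm fun N p ↦ (hT.asymptoticSeminorm_le _ N (X * p)).trans ?_
  have hfun : circleCoord ^ N * (circleCoord * h) - aeval circleCoord (X * p) =
      circleCoord ^ 1 * (circleCoord ^ N * h - aeval circleCoord p) := by
    simp only [map_mul, aeval_X]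
    ring
  have hop : T ^ N * aeval T (X * p) = T ^ 1 * (T ^ N * aeval T p) := by
    simp only [map_mul, aeval_X, ← mul_assoc, ← pow_succ, ← pow_succ', pow_one]
  rw [hfun, hop, norm_circleCoord_pow_mul]
  gcongr
  exact hT.norm_pow_mul_le 1 _

lemma asymptoticSeminorm_le_circleCoord_mul (hT : IsPolynomiallyContractive T) (h : C(𝕋, ℂ)) :
    hT.asymptoticSeminorm h ≤ hT.asymptoticSeminorm (circleCoord * h) := by
  refine hT.le_asymptoticSeminorm fun N p ↦ (hT.asymptoticSeminorm_le h (N + 1) p).trans ?_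
  rw [pow_succ, mul_assoc, pow_succ', mul_assoc]
  gcongr
  simpa only [pow_one] using hT.norm_pow_mul_le 1 (T ^ N * aeval T p)

lemma asymptoticSeminorm_circleCoord_pow_mul (hT : IsPolynomiallyContractive T) (N : ℕ)
    (h : C(𝕋, ℂ)) :
    hT.asymptoticSeminorm (circleCoord ^ N * h) = hT.asymptoticSeminorm h := by
  induction N with
  | zero => rw [pow_zero, one_mul]
  | succ N ih =>
    rw [pow_succ', mul_assoc, ← ih]
    exact (hT.asymptoticSeminorm_circleCoord_mul_le _).antisymm
      (hT.asymptoticSeminorm_le_circleCoord_mul _)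

end IsPolynomiallyContractive

/-- The closure of the graph of `p(λ) ↦ p(T)`: `(f, S)` belongs to it when `S` is a value of
`f(T)` obtained by approximating `f` by polynomials. -/
def polynomialCalculusGraph {A : Type*} [NormedRing A] [NormedAlgebra ℂ A] (T : A) :
    Set (C(𝕋, ℂ) × A) :=
  closure (Set.range fun p : ℂ[X] ↦ (aeval circleCoord p, aeval T p))

lemma aeval_mem_polynomialCalculusGraph {A : Type*} [NormedRing A] [NormedAlgebra ℂ A] (T : A)
    (p : ℂ[X]) : (aeval circleCoord p, aeval T p) ∈ polynomialCalculusGraph T :=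
  subset_closure ⟨p, rfl⟩

@[elab_as_elim]
lemma polynomialCalculusGraph_induction {A : Type*} [NormedRing A] [NormedAlgebra ℂ A] {T S : A}
    {f : C(𝕋, ℂ)} (hfS : (f, S) ∈ polynomialCalculusGraph T)
    {P : C(𝕋, ℂ) → A → Prop} (hP : IsClosed {x : _ × A | P x.1 x.2})
    (hpoly : ∀ p : ℂ[X], P (aeval circleCoord p) (aeval T p)) : P f S :=
  closure_minimal (t := {x : _ × A | P x.1 x.2}) (Set.range_subset_iff.2 hpoly) hP hfS

namespace IsPolynomiallyContractive

section Limit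

variable {A : Type*} [NormedRing A] [NormedAlgebra ℂ A] {T : A}
  {f : C(𝕋, ℂ)} {S : A}

lemma asymptoticSeminorm_le_norm_pow_mul (hT : IsPolynomiallyContractive T)
    (hfS : (f, S) ∈ polynomialCalculusGraph T) (n : ℕ) :
    hT.asymptoticSeminorm f ≤ ‖T ^ n * S‖ := by
  refine polynomialCalculusGraph_induction hfS ?_ fun p ↦ ?_
  · exact isClosed_le (hT.continuous_asymptoticSeminorm.comp continuous_fst) (by fun_prop)
  have happrox := hT.asymptoticSeminorm_le (aeval circleCoord p) n (X ^ n * p)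
  simp only [map_mul, map_pow, aeval_X, sub_self, norm_zero, zero_add] at happrox
  exact happrox.trans (hT.norm_pow_mul_le n _)

lemma norm_pow_mul_le_norm_sub_add (hT : IsPolynomiallyContractive T)
    (hfS : (f, S) ∈ polynomialCalculusGraph T) (N : ℕ) (p : ℂ[X]) :
    ‖T ^ (N + N) * S‖ ≤ ‖circleCoord ^ N * f - aeval circleCoord p‖ + ‖T ^ N * aeval T p‖ := by
  refine polynomialCalculusGraph_induction hfS ?_ fun q ↦ ?_
  · exact isClosed_le (by fun_prop) (by fun_prop)
  have hcontr := hT (X ^ N * q - p)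
  simp only [map_sub, map_mul, map_pow, aeval_X] at hcontr
  calc ‖T ^ (N + N) * aeval T q‖
    _ = ‖T ^ N * (T ^ N * aeval T q - aeval T p) + T ^ N * aeval T p‖ := by
      rw [mul_sub, sub_add_cancel, pow_add, mul_assoc]
    _ ≤ ‖T ^ N * aeval T q - aeval T p‖ + ‖T ^ N * aeval T p‖ :=
      (norm_add_le _ _).trans (by gcongr; exact hT.norm_pow_mul_le N _)
    _ ≤ ‖circleCoord ^ N * aeval circleCoord q - aeval circleCoord p‖ + ‖T ^ N * aeval T p‖ :=
      add_le_add_left hcontr _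

theorem tendsto_norm_pow_mul (hT : IsPolynomiallyContractive T)
    (hfS : (f, S) ∈ polynomialCalculusGraph T) :
    Tendsto (fun n ↦ ‖T ^ n * S‖) atTop (𝓝 (hT.asymptoticSeminorm f)) := by
  have hbdd : BddBelow (Set.range fun n ↦ ‖T ^ n * S‖) :=
    ⟨0, Set.forall_mem_range.2 fun n ↦ norm_nonneg _⟩
  have hinf : ⨅ n, ‖T ^ n * S‖ = hT.asymptoticSeminorm f :=
    le_antisymm
      (hT.le_asymptoticSeminorm fun N p ↦
        (ciInf_le hbdd (N + N)).trans (hT.norm_pow_mul_le_norm_sub_add hfS N p))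
      (le_ciInf fun n ↦ hT.asymptoticSeminorm_le_norm_pow_mul hfS n)
  exact hinf ▸ tendsto_atTop_ciInf (hT.antitone_norm_pow_mul S) hbdd

end Limit

section NullIdeal

variable {A : Type*} [NormedRing A] [NormedAlgebra ℂ A] {T R : A} {lam : ℂ}

lemma asymptoticSeminorm_le_norm_mul (hT : IsPolynomiallyContractive T)
    (hR : R * (algebraMap ℂ A lam - T) = 1) (h : C(𝕋, ℂ)) :
    hT.asymptoticSeminorm h ≤
      ‖R‖ * hT.asymptoticSeminorm ((algebraMap ℂ _ lam - circleCoord) * h) := by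
  have hcont := hT.continuous_asymptoticSeminorm
  refine dense_laurentPolynomials.induction (P := fun h ↦ hT.asymptoticSeminorm h ≤
      ‖R‖ * hT.asymptoticSeminorm ((algebraMap ℂ _ lam - circleCoord) * h)) ?_
    (isClosed_le hcont (.mul continuous_const (hcont.comp (by fun_prop)))) h
  rintro h ⟨N, p, hp⟩
  rw [← hT.asymptoticSeminorm_circleCoord_pow_mul N ((algebraMap ℂ _ lam - circleCoord) * h),
    ← hT.asymptoticSeminorm_circleCoord_pow_mul N h, mul_left_comm, hp]
  have hmul := hT.tendsto_norm_pow_mul (aeval_mem_polynomialCalculusGraph T ((C lam - X) * p))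
  simp only [map_mul, map_sub, aeval_C, aeval_X] at hmul
  refine le_of_tendsto_of_tendsto'
    (hT.tendsto_norm_pow_mul (aeval_mem_polynomialCalculusGraph T p)) (hmul.const_mul ‖R‖)
    fun n ↦ ?_
  have hcomm : Commute (T ^ n) (algebraMap ℂ A lam - T) :=
    .sub_right (Algebra.commutes lam (T ^ n)).symm (.pow_self T n)
  calc ‖T ^ n * aeval T p‖
    _ = ‖R * (T ^ n * ((algebraMap ℂ A lam - T) * aeval T p))‖ := by
      rw [← mul_assoc (T ^ n), hcomm.eq, mul_assoc, ← mul_assoc R, hR, one_mul]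
    _ ≤ ‖R‖ * ‖T ^ n * ((algebraMap ℂ A lam - T) * aeval T p)‖ := norm_mul_le _ _

lemma asymptoticSeminorm_eq_zero_of_support_subset (hT : IsPolynomiallyContractive T)
    (hR : R * (algebraMap ℂ A lam - T) = 1) {δ : ℝ} (hδ : 0 ≤ δ) (hRδ : ‖R‖ * δ < 1)
    {h : C(𝕋, ℂ)} (hsupp : ∀ x, h x ≠ 0 → ‖lam - x‖ ≤ δ) :
    hT.asymptoticSeminorm h = 0 := by
  set w : C(𝕋, ℂ) := algebraMap ℂ _ lam - circleCoord
  have hiter (n : ℕ) : hT.asymptoticSeminorm h ≤ ‖R‖ ^ n * hT.asymptoticSeminorm (w ^ n * h) := by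
    induction n with
    | zero => simp
    | succ n ih =>
      rw [pow_succ, mul_assoc, pow_succ', mul_assoc]
      exact ih.trans (by gcongr; exact hT.asymptoticSeminorm_le_norm_mul hR _)
  have hnorm (n : ℕ) : ‖w ^ n * h‖ ≤ δ ^ n * ‖h‖ := by
    refine (ContinuousMap.norm_le _ (by positivity)).2 fun x ↦ ?_
    rw [ContinuousMap.mul_apply, ContinuousMap.pow_apply, norm_mul, norm_pow]
    by_cases hx : h x = 0
    · rw [hx, norm_zero, mul_zero]
      positivity
    · gcongr
      · exact hsupp x hx
      · exact h.norm_coe_le_norm x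
  refine le_antisymm ?_ (apply_nonneg _ h)
  have hlim := (tendsto_pow_atTop_nhds_zero_of_lt_one (by positivity) hRδ).mul_const ‖h‖
  rw [zero_mul] at hlim
  refine ge_of_tendsto' hlim fun n ↦ (hiter n).trans ?_
  rw [mul_pow, mul_assoc]
  gcongr
  exact (hT.asymptoticSeminorm_le_norm _).trans (hnorm n)

lemma exists_asymptoticSeminorm_eq_zero_apply_ne_zero (hT : IsPolynomiallyContractive T)
    {x : 𝕋} (hx : (x : ℂ) ∉ spectrum ℂ T) :
    ∃ h, hT.asymptoticSeminorm h = 0 ∧ h x ≠ 0 := by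
  obtain ⟨R, hR⟩ := (spectrum.notMem_iff.1 hx).exists_left_inv
  set δ : ℝ := (‖R‖ + 1)⁻¹
  have hδ : 0 < δ := by positivity
  have hRδ : ‖R‖ * δ < 1 := by
    rw [← div_eq_mul_inv, div_lt_one (by positivity)]
    exact lt_add_one _
  refine ⟨⟨fun y ↦ ((max 0 (δ - ‖(x - y : ℂ)‖) : ℝ) : ℂ), by fun_prop⟩,
    hT.asymptoticSeminorm_eq_zero_of_support_subset hR hδ.le hRδ fun y hy ↦ ?_, ?_⟩
  · contrapose! hy
    simp [hy.le]
  · simp [hδ.le, hδ.ne']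

lemma asymptoticSeminorm_mul_eq_zero (hT : IsPolynomiallyContractive T) (g : C(𝕋, ℂ)) {h : C(𝕋, ℂ)}
    (hh : hT.asymptoticSeminorm h = 0) : hT.asymptoticSeminorm (g * h) = 0 := by
  induction g using ContinuousMap.induction_on_of_compact generalizing h with
  | const c =>
    change hT.asymptoticSeminorm (c • h) = 0
    rw [map_smul_eq_mul, hh, mul_zero]
  | id =>
    change hT.asymptoticSeminorm (circleCoord * h) = 0
    rw [← pow_one circleCoord, hT.asymptoticSeminorm_circleCoord_pow_mul, hh]
  | star_id =>
    change hT.asymptoticSeminorm (star circleCoord * h) = 0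
    rw [← hT.asymptoticSeminorm_circleCoord_pow_mul 1, pow_one, ← mul_assoc, mul_comm circleCoord,
      star_circleCoord_mul_self, one_mul, hh]
  | add f g hf hg =>
    refine le_antisymm ?_ (apply_nonneg _ _)
    rw [add_mul]
    exact (map_add_le_add _ _ _).trans_eq (by rw [hf hh, hg hh, add_zero])
  | mul f g hf hg => exact mul_assoc f g h ▸ hf (hg hh)
  | frequently f hf =>
    have hclosed : IsClosed {g | hT.asymptoticSeminorm (g * h) = 0} :=
      isClosed_eq (hT.continuous_asymptoticSeminorm.comp (by fun_prop)) continuous_const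
    exact hclosed.mem_of_frequently_of_tendsto (hf.mono fun g hg ↦ hg hh) tendsto_id

/-- The closed ideal of functions that vanish asymptotically on `T`. -/
def nullIdeal (hT : IsPolynomiallyContractive T) : Ideal C(𝕋, ℂ) where
  carrier := {h | hT.asymptoticSeminorm h = 0}
  zero_mem' := map_zero _
  add_mem' {f g} hf hg :=
    le_antisymm ((map_add_le_add _ f g).trans_eq (by rw [hf, hg, add_zero])) (apply_nonneg _ _)
  smul_mem' g _ hh := hT.asymptoticSeminorm_mul_eq_zero g hh

lemma asymptoticSeminorm_eq_zero (hT : IsPolynomiallyContractive T) {f : C(𝕋, ℂ)}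
    (hf : ∀ x : 𝕋, (x : ℂ) ∈ spectrum ℂ T → f x = 0) :
    hT.asymptoticSeminorm f = 0 := by
  change f ∈ hT.nullIdeal
  have hclosed : IsClosed (hT.nullIdeal : Set C(𝕋, ℂ)) :=
    isClosed_eq hT.continuous_asymptoticSeminorm continuous_const
  rw [← ContinuousMap.idealOfSet_ofIdeal_isClosed hclosed, ContinuousMap.mem_idealOfSet]
  intro x hx
  refine hf x (by_contra fun hxT ↦ ?_)
  obtain ⟨h, hh, hhx⟩ := hT.exists_asymptoticSeminorm_eq_zero_apply_ne_zero hxT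
  exact hhx (ContinuousMap.notMem_setOfIdeal.1 hx hh)

end NullIdeal

section Bounds

variable {A : Type*} [NormedRing A] [NormedAlgebra ℂ A] [CompleteSpace A] {T S : A}
  {f : C(𝕋, ℂ)}

lemma asymptoticSeminorm_le_of_forall_spectrum (hT : IsPolynomiallyContractive T) {M : ℝ}
    (hM : 0 ≤ M) (hf : ∀ x : 𝕋, (x : ℂ) ∈ spectrum ℂ T → ‖f x‖ ≤ M) :
    hT.asymptoticSeminorm f ≤ M := by
  set Lam : Set 𝕋 := (↑) ⁻¹' spectrum ℂ T
  have hLam : IsClosed Lam := (spectrum.isClosed T).preimage continuous_subtype_val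
  obtain ⟨g, hgnorm, hgf⟩ := BoundedContinuousFunction.exists_norm_eq_domRestrict_eq hLam (𝕜 := ℂ)
    ((BoundedContinuousFunction.mkOfCompact f).domRestrict Lam)
  set G : C(𝕋, ℂ) := g.toContinuousMap
  have hzero : hT.asymptoticSeminorm (f - G) = 0 := hT.asymptoticSeminorm_eq_zero fun x hx ↦
    sub_eq_zero.2 (DFunLike.congr_fun hgf (⟨x, hx⟩ : Lam)).symm
  calc hT.asymptoticSeminorm f
    _ = hT.asymptoticSeminorm ((f - G) + G) := by rw [sub_add_cancel]
    _ ≤ hT.asymptoticSeminorm (f - G) + hT.asymptoticSeminorm G := map_add_le_add _ _ _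
    _ ≤ ‖G‖ := by
      rw [hzero, zero_add]
      exact hT.asymptoticSeminorm_le_norm G
    _ ≤ M := by
      rw [BoundedContinuousFunction.norm_toContinuousMap_eq, hgnorm]
      exact (BoundedContinuousFunction.norm_le hM).2 fun x ↦ hf x x.2

lemma norm_apply_le_norm_pow_mul (hT : IsPolynomiallyContractive T)
    (hfS : (f, S) ∈ polynomialCalculusGraph T) {x : 𝕋}
    (hx : (x : ℂ) ∈ spectrum ℂ T) (n : ℕ) : ‖f x‖ ≤ ‖T ^ n * S‖ := by
  refine polynomialCalculusGraph_induction hfS ?_ fun p ↦ ?_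
  · exact isClosed_le (by fun_prop) (by fun_prop)
  have hspec : (X ^ n * p).eval (x : ℂ) ∈ spectrum ℂ (T ^ n * aeval T p) := by
    have himage := spectrum.subset_polynomial_aeval T (X ^ n * p) (Set.mem_image_of_mem _ hx)
    rwa [map_mul, map_pow, aeval_X] at himage
  calc ‖aeval circleCoord p x‖
    _ = ‖(X ^ n * p).eval (x : ℂ)‖ := by simp [circleCoord_apply]
    _ ≤ ‖T ^ n * aeval T p‖ * ‖(1 : A)‖ := spectrum.norm_le_norm_mul_of_mem hspec
    _ ≤ ‖T ^ n * aeval T p‖ := mul_le_of_le_one_right (norm_nonneg _) hT.norm_one_le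

lemma asymptoticSeminorm_eq_sSup (hT : IsPolynomiallyContractive T)
    (hfS : (f, S) ∈ polynomialCalculusGraph T) :
    hT.asymptoticSeminorm f =
      sSup ((fun x ↦ ‖f x‖) '' {x : 𝕋 | (x : ℂ) ∈ spectrum ℂ T}) := by
  refine le_antisymm ?_ ?_
  · refine hT.asymptoticSeminorm_le_of_forall_spectrum
      (Real.sSup_nonneg (Set.forall_mem_image.2 fun x _ ↦ norm_nonneg _)) fun x hx ↦ ?_
    exact le_csSup ⟨‖f‖, Set.forall_mem_image.2 fun x _ ↦ f.norm_coe_le_norm x⟩ ⟨x, hx, rfl⟩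
  · refine Real.sSup_le (Set.forall_mem_image.2 fun x hx ↦ ?_) (apply_nonneg _ _)
    exact ge_of_tendsto' (hT.tendsto_norm_pow_mul hfS) (hT.norm_apply_le_norm_pow_mul hfS hx)

end Bounds
end IsPolynomiallyContractive

section AbsolutelySummable

lemma isPolynomiallyContractive_circleCoord : IsPolynomiallyContractive circleCoord :=
  fun _ ↦ le_rfl

namespace IsPolynomiallyContractive

variable {A : Type*} [NormedRing A] [NormedAlgebra ℂ A] [CompleteSpace A] {T : A} {a : ℕ → ℂ}

lemma summable_smul_pow (hT : IsPolynomiallyContractive T) (ha : Summable fun m ↦ ‖a m‖) :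
    Summable fun m ↦ a m • T ^ m := by
  refine ha.of_norm_bounded fun m ↦ ?_
  rw [norm_smul]
  refine mul_le_of_le_one_right (norm_nonneg _) ?_
  simpa only [mul_one] using (hT.norm_pow_mul_le m 1).trans hT.norm_one_le

lemma tsum_mem_polynomialCalculusGraph (hT : IsPolynomiallyContractive T)
    (ha : Summable fun m ↦ ‖a m‖) :
    (∑' m, a m • circleCoord ^ m, ∑' m, a m • T ^ m) ∈ polynomialCalculusGraph T := by
  have hfun := (isPolynomiallyContractive_circleCoord.summable_smul_pow ha).hasSum.tendsto_sum_nat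
  have hop := (hT.summable_smul_pow ha).hasSum.tendsto_sum_nat
  refine mem_closure_of_tendsto (hfun.prodMk_nhds hop) (.of_forall fun k ↦ ?_)
  exact ⟨∑ m ∈ Finset.range k, a m • X ^ m, by simp only [map_sum, map_smul, map_pow, aeval_X]⟩

end IsPolynomiallyContractive

lemma tsum_smul_circleCoord_pow_apply {a : ℕ → ℂ} (ha : Summable fun m ↦ ‖a m‖) (x : 𝕋) :
    (∑' m, a m • circleCoord ^ m) x = ∑' m, a m * (x : ℂ) ^ m := by
  rw [← ContinuousMap.tsum_apply (isPolynomiallyContractive_circleCoord.summable_smul_pow ha)]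
  rfl

end AbsolutelySummable

theorem stmt_13_general {A : Type*} [CStarAlgebra A] (T : A) (hT : ‖T‖ ≤ 1)
    (a : ℕ → ℂ) (ha : Summable fun n ↦ ‖a n‖) :
    (∀ n : ℕ,
        sSup ((fun lam : ℂ ↦ ‖∑' m : ℕ, a m * lam ^ m‖) ''
            {lam : ℂ | lam ∈ spectrum ℂ T ∧ ‖lam‖ = 1}) ≤
          ‖T ^ n * ∑' m : ℕ, a m • T ^ m‖) ∧
      Tendsto (fun n : ℕ ↦ ‖T ^ n * ∑' m : ℕ, a m • T ^ m‖) atTop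
        (𝓝 (sSup ((fun lam : ℂ ↦ ‖∑' m : ℕ, a m * lam ^ m‖) ''
            {lam : ℂ | lam ∈ spectrum ℂ T ∧ ‖lam‖ = 1}))) := by
  have hcontr := isPolynomiallyContractive_of_norm_le_one hT
  have hgraph := hcontr.tsum_mem_polynomialCalculusGraph ha
  have hcircle : {lam : ℂ | lam ∈ spectrum ℂ T ∧ ‖lam‖ = 1} =
      (↑) '' {x : 𝕋 | (x : ℂ) ∈ spectrum ℂ T} := by
    ext lam
    simp
  have hsup := hcontr.asymptoticSeminorm_eq_sSup hgraph
  simp only [tsum_smul_circleCoord_pow_apply ha] at hsup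
  rw [hcircle, Set.image_image, ← hsup]
  exact ⟨hcontr.asymptoticSeminorm_le_norm_pow_mul hgraph, hcontr.tendsto_norm_pow_mul hgraph⟩

/-- ℤ₊-instance of Corollary 4.3: let `T` be a contraction on a complex Hilbert space,
`Λ := σ(T) ∩ 𝕋`, and suppose `Λ` is a Helson set with Helson constant at most `α`, i.e.
for every `c ∈ ℓ¹(ℤ)`, `dist(c, K_Λ) ≤ α·sup_{λ∈Λ}|ĉ(λ)|`. Then for every `a ∈ ℓ¹(ℕ)`,
`sup_{λ∈Λ}|â(λ)| ≤ ‖Tⁿ â(T)‖` for every `n`, and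
`limsup_n ‖Tⁿ â(T)‖ ≤ α·sup_{λ∈Λ}|â(λ)|`. -/
theorem stmt_13 {X : Type*} [NormedAddCommGroup X] [InnerProductSpace ℂ X] [CompleteSpace X]
    (T : X →L[ℂ] X) (hT : ‖T‖ ≤ 1)
    (a : ℕ → ℂ) (ha : Summable fun n : ℕ => ‖a n‖)
    (α : ℝ) (hα : 1 ≤ α)
    (hHelson : ∀ c : ℤ → ℂ, (Summable fun n : ℤ => ‖c n‖) →
      sInf { r : ℝ | ∃ b : ℤ → ℂ, (Summable fun n : ℤ => ‖b n‖) ∧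
          (∀ lam ∈ spectrum ℂ T, ‖lam‖ = 1 → (∑' n : ℤ, b n * lam ^ n) = 0) ∧
          r = ∑' n : ℤ, ‖c n - b n‖ } ≤
        α * sSup ((fun lam : ℂ => ‖∑' n : ℤ, c n * lam ^ n‖) ''
          { lam : ℂ | lam ∈ spectrum ℂ T ∧ ‖lam‖ = 1 })) :
    (∀ n : ℕ,
        sSup ((fun lam : ℂ => ‖∑' m : ℕ, a m * lam ^ m‖) ''
            { lam : ℂ | lam ∈ spectrum ℂ T ∧ ‖lam‖ = 1 }) ≤
          ‖T ^ n * (∑' m : ℕ, a m • T ^ m)‖) ∧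
      Filter.limsup (fun n : ℕ => ‖T ^ n * (∑' m : ℕ, a m • T ^ m)‖) atTop ≤
        α * sSup ((fun lam : ℂ => ‖∑' m : ℕ, a m * lam ^ m‖) ''
            { lam : ℂ | lam ∈ spectrum ℂ T ∧ ‖lam‖ = 1 }) := by
  obtain ⟨hlower, hlim⟩ := stmt_13_general T hT a ha
  exact ⟨hlower, hlim.limsup_eq.trans_le <| le_mul_of_one_le_left
    (Real.sSup_nonneg (Set.forall_mem_image.2 fun _ _ ↦ norm_nonneg _)) hα⟩
end

section
/- Let X be a complex Hilbert space, let T ∈ B(X) be power-bounded, let x ∈ X, and let a ∈ ℓ¹(ℕ). If â(λ) = 0 for every λ in the unitary local spectrum Spu(T;x) of T at x, then ‖Tⁿ â(T) x‖ → 0 as n → ∞. (ℤ₊-instance of Theorem 5.1 of the paper.) -/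
open Filter Topology

/-- `λ ∈ 𝕋` is locally regular at `x` for the operator `T`: there exist finitely many
`a₁,…,aₙ ∈ ℓ¹(ℕ)`, an open neighbourhood `Ω ⊆ ℂⁿ` of `(â₁(λ),…,âₙ(λ))`, and holomorphic
functions `g₁,…,gₙ : Ω → X` with `∑ₖ (μₖ·I − âₖ(T)) gₖ(μ) = x` for all `μ ∈ Ω`. -/
def LocallyRegular {X : Type*} [NormedAddCommGroup X] [NormedSpace ℂ X] [CompleteSpace X]
    (T : X →L[ℂ] X) (x : X) (lam : ℂ) : Prop :=
  ∃ (n : ℕ) (a : Fin n → ℕ → ℂ),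
    (∀ k, Summable fun m : ℕ => ‖a k m‖) ∧
    ∃ Ω : Set (Fin n → ℂ), IsOpen Ω ∧ (fun k => ∑' m : ℕ, a k m * lam ^ m) ∈ Ω ∧
      ∃ g : Fin n → (Fin n → ℂ) → X,
        (∀ k, AnalyticOnNhd ℂ (g k) Ω) ∧
        ∀ μ ∈ Ω, ∑ k : Fin n, (μ k • g k μ - (∑' m : ℕ, a k m • T ^ m) (g k μ)) = x

/-!
A Banach limit of `⟪Tⁿ x, Tⁿ y⟫` is a semi-inner product on `X`, for which `T` extends to a
unitary operator `U` on a Hilbert space; write `Q` for the canonical map from `X`. By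
power-boundedness `Q x = 0` forces `‖Tⁿ x‖ → 0`, and `Q` carries local regularity for `T` over to
`U`, so it suffices to show `â(U) (Q x) = 0`.

Suppose `∑ k, (μ k - bₖ(U)) (g k μ) = y` near `μ = b(ζ)`, and take `f` continuous on the spectrum
of `U`, supported close to `ζ`, with `f(ζ) ≠ 0`. Put `βₖ = bₖ - bₖ(ζ)`. Expand `g k` at `b(ζ)` into
homogeneous terms `p k m` and substitute `U` for the variable `ξ` of `f(ξ) • p k m (β(ξ))`; the
resulting vectors `S k m` tend to `0` as `m → ∞`, because every `βₖ` is small on the support of `f`.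
Comparing homogeneous terms, `∑ k, βₖ(U) (S k m) = -f(U) y` for every `m`, hence `f(U) y = 0`.
The closed ideal `{f | f(U) y = 0}` therefore contains every function that vanishes on the unitary
local spectrum, in particular `â`.

Before the substitution, the identities live in `C(K, 𝕜) ⊗ H`, with `K` the spectrum of `U`, where
they can be checked pointwise.
-/

section Cesaro

variable {E F : Type*} [NormedAddCommGroup E] [NormedSpace ℝ E]
  [NormedAddCommGroup F] [NormedSpace ℝ F]

/-- The `N`-th Cesàro mean `(c 0 + ⋯ + c N) / (N + 1)` of the sequence `c`. -/
noncomputable def cesaroMean (c : ℕ → E) (N : ℕ) : E :=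
  ((N : ℝ) + 1)⁻¹ • ∑ n ∈ Finset.range (N + 1), c n

/-- A Banach limit: the limit of the Cesàro means along a fixed non-principal ultrafilter. It is
meaningful for bounded sequences in a proper space, where that limit exists. -/
noncomputable def cesaroLim (c : ℕ → E) : E :=
  limUnder (hyperfilter ℕ : Filter ℕ) (cesaroMean c)

lemma cesaroMean_mem {c : ℕ → E} {s : Set E} (hs : Convex ℝ s) (hc : ∀ n, c n ∈ s) (N : ℕ) :
    cesaroMean c N ∈ s := by
  rw [cesaroMean, Finset.smul_sum]
  refine hs.sum_mem (fun _ _ => by positivity) ?_ fun n _ => hc n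
  simp [mul_inv_cancel₀ (N.cast_add_one_ne_zero (R := ℝ))]

lemma cesaroMean_continuousLinearMap (L : E →L[ℝ] F) (c : ℕ → E) (N : ℕ) :
    cesaroMean (fun n => L (c n)) N = L (cesaroMean c N) := by
  simp only [cesaroMean, map_smul, map_sum]

lemma cesaroMean_succ_sub_cesaroMean (c : ℕ → E) (N : ℕ) :
    cesaroMean (fun n => c (n + 1)) N - cesaroMean c N = ((N : ℝ) + 1)⁻¹ • (c (N + 1) - c 0) := by
  rw [cesaroMean, cesaroMean, ← smul_sub, ← Finset.sum_sub_distrib, Finset.sum_range_sub]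

variable [ProperSpace E] {c d : ℕ → E}

lemma tendsto_cesaroMean (hc : Bornology.IsBounded (Set.range c)) :
    Tendsto (cesaroMean c) (hyperfilter ℕ) (𝓝 (cesaroLim c)) := by
  obtain ⟨M, hM⟩ := hc.subset_closedBall 0
  have hmean : ∀ N, cesaroMean c N ∈ Metric.closedBall (0 : E) M :=
    cesaroMean_mem (convex_closedBall 0 M) fun n => hM (Set.mem_range_self n)
  obtain ⟨z, -, hz⟩ := (isCompact_closedBall (0 : E) M).ultrafilter_le_nhds
    ((hyperfilter ℕ).map (cesaroMean c)) (tendsto_principal.2 (Eventually.of_forall hmean))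
  exact tendsto_nhds_limUnder ⟨z, hz⟩

lemma cesaroLim_mem (hc : Bornology.IsBounded (Set.range c)) {s : Set E} (hs : Convex ℝ s)
    (hs' : IsClosed s) (hcs : ∀ n, c n ∈ s) : cesaroLim c ∈ s :=
  hs'.mem_of_tendsto (tendsto_cesaroMean hc) (Eventually.of_forall (cesaroMean_mem hs hcs))

lemma cesaroLim_add (hc : Bornology.IsBounded (Set.range c))
    (hd : Bornology.IsBounded (Set.range d)) :
    cesaroLim (fun n => c n + d n) = cesaroLim c + cesaroLim d := by
  refine (((tendsto_cesaroMean hc).add (tendsto_cesaroMean hd)).congr fun N => ?_).limUnder_eq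
  simp only [cesaroMean, Finset.sum_add_distrib, smul_add]

lemma cesaroLim_continuousLinearMap (L : E →L[ℝ] F) (hc : Bornology.IsBounded (Set.range c)) :
    cesaroLim (fun n => L (c n)) = L (cesaroLim c) := by
  refine Tendsto.limUnder_eq ?_
  simp only [funext (cesaroMean_continuousLinearMap L c)]
  exact (L.continuous.tendsto _).comp (tendsto_cesaroMean hc)

lemma cesaroLim_succ (hc : Bornology.IsBounded (Set.range c)) :
    cesaroLim (fun n => c (n + 1)) = cesaroLim c := by
  obtain ⟨M, hM⟩ := hc.exists_norm_le
  have hinv : Tendsto (fun N : ℕ => ((N : ℝ) + 1)⁻¹) atTop (𝓝 0) := by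
    simpa only [one_div] using tendsto_one_div_add_atTop_nhds_zero_nat (𝕜 := ℝ)
  have hdiff : Tendsto (fun N => cesaroMean (fun n => c (n + 1)) N - cesaroMean c N)
      (hyperfilter ℕ) (𝓝 0) := by
    simp only [cesaroMean_succ_sub_cesaroMean]
    refine (hinv.zero_smul_isBoundedUnder_le ?_).mono_left Nat.hyperfilter_le_atTop
    exact isBoundedUnder_of ⟨M + M, fun N => norm_sub_le_of_le
      (hM _ (Set.mem_range_self _)) (hM _ (Set.mem_range_self _))⟩
  refine Tendsto.limUnder_eq ?_
  simpa only [sub_add_cancel, zero_add] using hdiff.add (tendsto_cesaroMean hc)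

end Cesaro

/-- The bounded two-sided sequences in `X`, with the semi-inner product given by the Banach limit
of `⟪s n, t n⟫` over `n ≥ 0`. Two-sided sequences make the shift invertible. The scalar field is a
parameter because the inner product, hence the norm, takes values in it. -/
def CesaroSpace (_𝕜 X : Type*) [NormedAddCommGroup X] : Type _ :=
  BoundedContinuousFunction ℤ X

namespace CesaroSpace

open UniformSpace
open scoped BoundedContinuousFunction

variable {𝕜 X : Type*} [NormedAddCommGroup X]

noncomputable instance : AddCommGroup (CesaroSpace 𝕜 X) := inferInstanceAs (AddCommGroup (ℤ →ᵇ X))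

instance : FunLike (CesaroSpace 𝕜 X) ℤ X := inferInstanceAs (FunLike (ℤ →ᵇ X) ℤ X)

lemma isBounded_range (s : CesaroSpace 𝕜 X) : Bornology.IsBounded (Set.range s) :=
  BoundedContinuousFunction.isBounded_range (show ℤ →ᵇ X from s)

lemma isBounded_range_norm_sq (s : CesaroSpace 𝕜 X) :
    Bornology.IsBounded (Set.range fun n : ℕ => ‖s n‖ ^ 2) := by
  obtain ⟨M, hM⟩ := s.isBounded_range.exists_norm_le
  refine isBounded_iff_forall_norm_le.2 ⟨M ^ 2, Set.forall_mem_range.2 fun n => ?_⟩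
  rw [norm_pow, norm_norm]
  exact pow_le_pow_left₀ (norm_nonneg _) (hM _ (Set.mem_range_self _)) 2

variable [RCLike 𝕜] [InnerProductSpace 𝕜 X]

noncomputable instance : Module 𝕜 (CesaroSpace 𝕜 X) := inferInstanceAs (Module 𝕜 (ℤ →ᵇ X))

lemma isBounded_range_inner (s t : CesaroSpace 𝕜 X) :
    Bornology.IsBounded (Set.range fun n : ℕ => inner 𝕜 (s n) (t n)) := by
  obtain ⟨M, hM⟩ := s.isBounded_range.exists_norm_le
  obtain ⟨N, hN⟩ := t.isBounded_range.exists_norm_le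
  refine isBounded_iff_forall_norm_le.2 ⟨M * N, Set.forall_mem_range.2 fun n => ?_⟩
  have hs := hM _ (Set.mem_range_self (n : ℤ))
  have ht := hN _ (Set.mem_range_self (n : ℤ))
  exact (norm_inner_le_norm _ _).trans
    (mul_le_mul hs ht (norm_nonneg _) ((norm_nonneg _).trans hs))

lemma re_cesaroLim_inner_self (s : CesaroSpace 𝕜 X) :
    RCLike.re (cesaroLim fun n : ℕ => inner 𝕜 (s n) (s n)) = cesaroLim fun n : ℕ => ‖s n‖ ^ 2 := by
  simpa using (cesaroLim_continuousLinearMap (RCLike.reCLM (K := 𝕜))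
    (isBounded_range_inner s s)).symm

noncomputable instance core : PreInnerProductSpace.Core 𝕜 (CesaroSpace 𝕜 X) where
  inner s t := cesaroLim fun n : ℕ => inner 𝕜 (s n) (t n)
  conj_inner_symm s t := by
    simpa using (cesaroLim_continuousLinearMap (RCLike.conjCLE (K := 𝕜)).toContinuousLinearMap
      (isBounded_range_inner t s)).symm
  re_inner_nonneg s := by
    rw [re_cesaroLim_inner_self]
    exact cesaroLim_mem s.isBounded_range_norm_sq (convex_Ici 0) isClosed_Ici
      fun n => sq_nonneg ‖s n‖
  add_left s t u := by
    rw [← cesaroLim_add (isBounded_range_inner s u) (isBounded_range_inner t u)]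
    simp only [← inner_add_left]
    rfl
  smul_left s t r := by
    refine Eq.trans ?_ (cesaroLim_continuousLinearMap
      (ContinuousLinearMap.mul ℝ 𝕜 (starRingEnd 𝕜 r)) (isBounded_range_inner s t))
    simp only [ContinuousLinearMap.mul_apply', ← inner_smul_left]
    rfl

noncomputable instance : SeminormedAddCommGroup (CesaroSpace 𝕜 X) :=
  InnerProductSpace.Core.toSeminormedAddCommGroup (𝕜 := 𝕜)

noncomputable instance : InnerProductSpace 𝕜 (CesaroSpace 𝕜 X) := InnerProductSpace.ofCore core

lemma norm_sq_eq (s : CesaroSpace 𝕜 X) : ‖s‖ ^ 2 = cesaroLim fun n : ℕ => ‖s n‖ ^ 2 := by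
  rw [← re_cesaroLim_inner_self (𝕜 := 𝕜), ← inner_self_eq_norm_sq (𝕜 := 𝕜)]
  rfl

lemma norm_le {s : CesaroSpace 𝕜 X} {M : ℝ} (h : ∀ n : ℕ, ‖s n‖ ≤ M) : ‖s‖ ≤ M := by
  have hM : 0 ≤ M := (norm_nonneg _).trans (h 0)
  rw [← sq_le_sq₀ (norm_nonneg _) hM, norm_sq_eq]
  exact cesaroLim_mem s.isBounded_range_norm_sq (convex_Iic _) isClosed_Iic
    fun n => pow_le_pow_left₀ (norm_nonneg _) (h n) 2

lemma le_norm {s : CesaroSpace 𝕜 X} {M : ℝ} (hM : 0 ≤ M) (h : ∀ n : ℕ, M ≤ ‖s n‖) : M ≤ ‖s‖ := by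
  rw [← sq_le_sq₀ hM (norm_nonneg _), norm_sq_eq]
  exact cesaroLim_mem s.isBounded_range_norm_sq (convex_Ici _) isClosed_Ici
    fun n => pow_le_pow_left₀ hM (h n) 2

variable (𝕜 X) in
/-- The left shift `(s n) ↦ (s (n + 1))`, which is isometric by shift invariance of the Banach
limit. -/
noncomputable def shift : CesaroSpace 𝕜 X ≃ₗᵢ[𝕜] CesaroSpace 𝕜 X where
  toFun s := BoundedContinuousFunction.compContinuous s ⟨(· + 1), continuous_of_discreteTopology⟩
  invFun s := BoundedContinuousFunction.compContinuous s ⟨(· - 1), continuous_of_discreteTopology⟩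
  map_add' _ _ := rfl
  map_smul' _ _ := rfl
  left_inv s := DFunLike.ext _ _ fun n => congrArg s (sub_add_cancel n 1)
  right_inv s := DFunLike.ext _ _ fun n => congrArg s (add_sub_cancel_right n 1)
  norm_map' s := by
    rw [← sq_eq_sq₀ (norm_nonneg _) (norm_nonneg _), norm_sq_eq, norm_sq_eq,
      ← cesaroLim_succ s.isBounded_range_norm_sq]
    rfl

variable (𝕜 X) in
/-- The unitary operator induced by `shift` on the Hilbert space completion. -/
noncomputable def unitaryShift :
    unitary (Completion (CesaroSpace 𝕜 X) →L[𝕜] Completion (CesaroSpace 𝕜 X)) :=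
  Unitary.linearIsometryEquiv.symm <|
    (shift 𝕜 X).toLinearEquiv.extendOfIsometry Completion.toComplₗᵢ.toLinearMap
      Completion.toComplₗᵢ.toLinearMap Completion.denseRange_coe Completion.denseRange_coe
      fun s => by simp

lemma unitaryShift_coe (s : CesaroSpace 𝕜 X) :
    (unitaryShift 𝕜 X).1 (s : Completion (CesaroSpace 𝕜 X)) = (shift 𝕜 X s : CesaroSpace 𝕜 X) :=
  LinearEquiv.extendOfIsometry_eq _ _ _ Completion.denseRange_coe Completion.denseRange_coe
    (fun s => by simp) s

variable {T : X →L[𝕜] X} {M : ℝ}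

/-- The orbit map of a power-bounded operator `T`, sending `x` to the sequence
`n ↦ T ^ max n 0 x`. -/
noncomputable def orbit (hT : ∀ n, ‖T ^ n‖ ≤ M) : X →L[𝕜] CesaroSpace 𝕜 X :=
  LinearMap.mkContinuous
    { toFun x := BoundedContinuousFunction.ofNormedAddCommGroupDiscrete
        (fun n : ℤ => (T ^ n.toNat) x) (M * ‖x‖) fun n => (T ^ n.toNat).le_of_opNorm_le (hT _) x
      map_add' x y := DFunLike.ext _ _ fun n => map_add (T ^ n.toNat) x y
      map_smul' c x := DFunLike.ext _ _ fun n => map_smul (T ^ n.toNat) c x }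
    M fun x => norm_le fun n => (T ^ n).le_of_opNorm_le (hT n) x

/-- The orbit map followed by the canonical map into the completion. Its kernel is the kernel of
the seminorm `x ↦ ‖orbit hT x‖`. -/
noncomputable def completionOrbit (hT : ∀ n, ‖T ^ n‖ ≤ M) :
    X →L[𝕜] Completion (CesaroSpace 𝕜 X) :=
  Completion.toComplL.comp (orbit hT)

lemma norm_completionOrbit (hT : ∀ n, ‖T ^ n‖ ≤ M) (x : X) :
    ‖completionOrbit hT x‖ = ‖orbit hT x‖ :=
  Completion.norm_coe _

lemma semiconj_completionOrbit (hT : ∀ n, ‖T ^ n‖ ≤ M) :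
    Function.Semiconj (completionOrbit hT) T (unitaryShift 𝕜 X).1 := by
  intro x
  have hzero (n : ℕ) : (orbit hT (T x) - shift 𝕜 X (orbit hT x)) n = 0 := by
    change (T ^ n) (T x) - (T ^ (n + 1)) x = 0
    rw [pow_succ, mul_apply_eq_comp, sub_self]
  have hnorm : ‖orbit hT (T x) - shift 𝕜 X (orbit hT x)‖ ≤ 0 :=
    norm_le fun n => (norm_eq_zero.2 (hzero n)).le
  change (orbit hT (T x) : Completion (CesaroSpace 𝕜 X)) =
    (unitaryShift 𝕜 X).1 (orbit hT x : Completion (CesaroSpace 𝕜 X))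
  rwa [unitaryShift_coe, ← sub_eq_zero, ← Completion.coe_sub, ← norm_le_zero_iff,
    Completion.norm_coe]

lemma tendsto_norm_pow_apply_of_completionOrbit_eq_zero (hT : ∀ n, ‖T ^ n‖ ≤ M) {x : X}
    (hx : completionOrbit hT x = 0) : Tendsto (fun n => ‖(T ^ n) x‖) atTop (𝓝 0) := by
  have hM : 0 ≤ M := (norm_nonneg _).trans (hT 0)
  refine Metric.tendsto_atTop.2 fun ε hε => ?_
  obtain ⟨n, hn⟩ : ∃ n, ‖(T ^ n) x‖ < ε / (M + 1) := by
    by_contra! hlow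
    have hle : ε / (M + 1) ≤ ‖orbit hT x‖ := le_norm (by positivity) hlow
    have hpos : 0 < ε / (M + 1) := by positivity
    rw [← norm_completionOrbit, hx, norm_zero] at hle
    exact hpos.not_ge hle
  refine ⟨n, fun m hm => ?_⟩
  rw [dist_zero_right, norm_norm]
  calc ‖(T ^ m) x‖ = ‖(T ^ (m - n)) ((T ^ n) x)‖ := by
        rw [← mul_apply_eq_comp, ← pow_add, Nat.sub_add_cancel hm]
    _ ≤ M * ‖(T ^ n) x‖ := (T ^ (m - n)).le_of_opNorm_le (hT _) _
    _ ≤ (M + 1) * ‖(T ^ n) x‖ := by gcongr; linarith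
    _ < ε := (lt_div_iff₀' (by positivity)).1 hn

end CesaroSpace

section PowerSeries

variable {𝕜 E H : Type*} [NontriviallyNormedField 𝕜] [NormedAddCommGroup E] [NormedSpace 𝕜 E]
  [NormedAddCommGroup H] [NormedSpace 𝕜 H]

lemma eq_zero_of_eventually_hasSum_pow_smul_zero {c : ℕ → H}
    (h : ∀ᶠ t in 𝓝 (0 : 𝕜), HasSum (fun m => t ^ m • c m) 0) (m : ℕ) : c m = 0 := by
  let p : FormalMultilinearSeries 𝕜 𝕜 H := fun m => ContinuousMultilinearMap.mkPiRing 𝕜 _ (c m)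
  have hcoeff (m : ℕ) : p.coeff m = c m := by simp [p, FormalMultilinearSeries.coeff]
  have hp : HasFPowerSeriesAt (fun _ => (0 : H)) p (0 : 𝕜) := by
    simpa only [hasFPowerSeriesAt_iff, hcoeff] using h
  have hp0 : p = 0 := HasFPowerSeriesAt.eq_zero hp
  rw [← hcoeff, hp0, FormalMultilinearSeries.coeff]
  rfl

lemma tendsto_smul_const_nhds_zero (v : E) : Tendsto (fun t : 𝕜 => t • v) (𝓝 0) (𝓝 0) :=
  Continuous.tendsto' (by fun_prop) _ _ (zero_smul 𝕜 v)

lemma eventually_hasSum_pow_smul {g : E → H} {p : FormalMultilinearSeries 𝕜 E H}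
    (hp : HasFPowerSeriesAt g p 0) (v : E) :
    ∀ᶠ t in 𝓝 (0 : 𝕜), HasSum (fun m => t ^ m • p m fun _ => v) (g (t • v)) := by
  filter_upwards [(tendsto_smul_const_nhds_zero v).eventually hp.eventually_hasSum] with t ht
  have hhom (m : ℕ) : (p m fun _ => t • v) = t ^ m • p m fun _ => v := by
    simpa using (p m).map_smul_univ (fun _ => t) fun _ => v
  simpa only [zero_add, hhom] using ht

/-- Comparison of the coefficients of `t ^ m` in the equation `hg` at the points `t • v`. -/
lemma coeff_relations {ι : Type*} [Fintype ι] {g : ι → (ι → 𝕜) → H}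
    {p : ι → FormalMultilinearSeries 𝕜 (ι → 𝕜) H} {A : ι → H →L[𝕜] H} {y : H}
    (hp : ∀ k, HasFPowerSeriesAt (g k) (p k) 0)
    (hg : ∀ᶠ v in 𝓝 0, ∑ k, (v k • g k v - A k (g k v)) = y) (v : ι → 𝕜) :
    ∑ k, A k (p k 0 fun _ => v) = -y ∧
      ∀ m, ∑ k, A k (p k (m + 1) fun _ => v) = ∑ k, v k • p k m fun _ => v := by
  let c : ℕ → H := fun m =>
    ∑ k, A k (p k m fun _ => v) - m.casesOn (-y) fun j => ∑ k, v k • p k j fun _ => v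
  have hc : ∀ᶠ t in 𝓝 (0 : 𝕜), HasSum (fun m => t ^ m • c m) 0 := by
    filter_upwards [(tendsto_smul_const_nhds_zero v).eventually hg, eventually_all.2 fun k =>
      eventually_hasSum_pow_smul (hp k) v] with t hgt hpt
    have hA := hasSum_sum fun k (_ : k ∈ Finset.univ) => (A k).hasSum (hpt k)
    have hv := hasSum_sum fun k (_ : k ∈ Finset.univ) => (hpt k).const_smul (t * v k)
    refine (hasSum_nat_add_iff' 1).1 ?_
    convert ((hasSum_nat_add_iff' 1).2 hA).sub hv using 1
    · funext m
      have hterm (k : ι) : (t * v k) • t ^ m • (p k m fun _ => v) =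
          t ^ (m + 1) • v k • p k m fun _ => v := by
        simp only [smul_smul]; ring_nf
      simp only [c, map_smul, smul_sub, Finset.smul_sum, hterm]
    · simp only [Pi.smul_apply, smul_eq_mul, Finset.sum_sub_distrib] at hgt
      have hc0 : ∑ m ∈ Finset.range 1, t ^ m • c m = (∑ k, A k (p k 0 fun _ => v)) + y := by
        simp [c]
      simp only [hc0, ← hgt, Finset.sum_range_one, pow_zero, one_smul]
      abel
  have hc0 := eq_zero_of_eventually_hasSum_pow_smul_zero hc
  exact ⟨sub_eq_zero.1 (hc0 0), fun m => sub_eq_zero.1 (hc0 (m + 1))⟩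

end PowerSeries

section Tensor

open scoped TensorProduct NNReal

variable {𝕜 K H : Type*} [RCLike 𝕜] [TopologicalSpace K] [NormedAddCommGroup H]
  [NormedSpace 𝕜 H]

lemma exists_continuousMap_ne_zero_and_imp_le {ι : Type*} [Finite ι] {r : ℝ≥0} (hr : 0 < r)
    {β : ι → C(K, 𝕜)} {ζ : K} (hζ : ∀ k, β k ζ = 0) :
    ∃ f : C(K, 𝕜), f ζ ≠ 0 ∧ ∀ ξ, f ξ ≠ 0 → ∀ k, ‖β k ξ‖ ≤ r := by
  cases nonempty_fintype ι
  let f : C(K, 𝕜) := ⟨fun ξ => ((max 0 (r - ‖fun k => β k ξ‖) : ℝ) : 𝕜), by fun_prop⟩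
  have hf (ξ : K) : f ξ ≠ 0 ↔ ‖fun k => β k ξ‖ < r := by
    simp only [f, ContinuousMap.coe_mk, ne_eq, RCLike.ofReal_eq_zero, max_eq_left_iff,
      sub_nonpos, not_le]
  have hβζ : (fun k => β k ζ) = 0 := funext hζ
  refine ⟨f, (hf ζ).2 ?_, fun ξ hξ k => ?_⟩
  · rwa [hβζ, norm_zero, NNReal.coe_pos]
  · exact (norm_le_pi_norm (fun k => β k ξ) k).trans ((hf ξ).1 hξ).le

variable (H) in
/-- Evaluation at `ξ` of an element of `C(K, 𝕜) ⊗ H`, viewed as an `H`-valued function on `K`. -/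
noncomputable def tensorEval (ξ : K) : C(K, 𝕜) ⊗[𝕜] H →ₗ[𝕜] H :=
  TensorProduct.lid 𝕜 H ∘ₗ (ContinuousMap.evalCLM 𝕜 ξ).toLinearMap.rTensor H

@[simp]
lemma tensorEval_tmul (ξ : K) (f : C(K, 𝕜)) (h : H) : tensorEval H ξ (f ⊗ₜ h) = f ξ • h := rfl

lemma eq_of_forall_tensorEval_eq {σ τ : C(K, 𝕜) ⊗[𝕜] H}
    (h : ∀ ξ, tensorEval H ξ σ = tensorEval H ξ τ) : σ = τ := by
  classical
  let b := Module.Basis.ofVectorSpace 𝕜 H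
  let e := TensorProduct.equivFinsuppOfBasisRight (M := C(K, 𝕜)) b
  have hcoord (ξ : K) (i) (ρ : C(K, 𝕜) ⊗[𝕜] H) : e ρ i ξ = b.repr (tensorEval H ξ ρ) i := by
    induction ρ with
    | zero => simp
    | tmul f h => simp [e, mul_comm]
    | add ρ₁ ρ₂ h₁ h₂ => simp [h₁, h₂]
  refine e.injective (Finsupp.ext fun i => ContinuousMap.ext fun ξ => ?_)
  rw [hcoord, hcoord, h]

/-- The linear map `C(K, 𝕜) ⊗ H → H` induced by `f ⊗ h ↦ Ψ f h`: it substitutes an operator for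
the variable of an `H`-valued function on `K` of finite rank. -/
noncomputable def operatorEval (Ψ : C(K, 𝕜) →A[𝕜] (H →L[𝕜] H)) : C(K, 𝕜) ⊗[𝕜] H →ₗ[𝕜] H :=
  TensorProduct.lift (ContinuousLinearMap.coeLM 𝕜 ∘ₗ (Ψ : C(K, 𝕜) →ₗ[𝕜] (H →L[𝕜] H)))

variable (Ψ : C(K, 𝕜) →A[𝕜] (H →L[𝕜] H))

@[simp]
lemma operatorEval_tmul (f : C(K, 𝕜)) (h : H) : operatorEval Ψ (f ⊗ₜ h) = Ψ f h := rfl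

lemma operatorEval_smul (β : C(K, 𝕜)) (τ : C(K, 𝕜) ⊗[𝕜] H) :
    operatorEval Ψ (β • τ) = Ψ β (operatorEval Ψ τ) := by
  induction τ with
  | zero => simp
  | tmul f h => simp [TensorProduct.smul_tmul']
  | add ρ₁ ρ₂ h₁ h₂ => simp [h₁, h₂]

lemma operatorEval_lTensor (β : C(K, 𝕜)) (τ : C(K, 𝕜) ⊗[𝕜] H) :
    operatorEval Ψ ((Ψ β).toLinearMap.lTensor _ τ) = Ψ β (operatorEval Ψ τ) := by
  induction τ with
  | zero => simp
  | tmul f h =>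
    simp only [LinearMap.lTensor_tmul, operatorEval_tmul, ContinuousLinearMap.coe_coe,
      ← mul_apply_eq_comp, ← map_mul, mul_comm]
  | add ρ₁ ρ₂ h₁ h₂ => simp [h₁, h₂]

lemma tensorEval_smul (ξ : K) (β : C(K, 𝕜)) (τ : C(K, 𝕜) ⊗[𝕜] H) :
    tensorEval H ξ (β • τ) = β ξ • tensorEval H ξ τ := by
  induction τ with
  | zero => simp
  | tmul f h => simp [TensorProduct.smul_tmul', mul_smul]
  | add ρ₁ ρ₂ h₁ h₂ => simp [h₁, h₂]

lemma tensorEval_lTensor (ξ : K) (A : H →ₗ[𝕜] H) (τ : C(K, 𝕜) ⊗[𝕜] H) :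
    tensorEval H ξ (A.lTensor _ τ) = A (tensorEval H ξ τ) := by
  induction τ with
  | zero => simp
  | tmul f h => simp
  | add ρ₁ ρ₂ h₁ h₂ => simp [h₁, h₂]

variable {ι : Type*} [Fintype ι]

section PolySubst

variable [DecidableEq ι] {m : ℕ}

/-- The element of `C(K, 𝕜) ⊗ H` representing the function `ξ ↦ f ξ • q (β ξ, …, β ξ)`. -/
noncomputable def polySubst (f : C(K, 𝕜)) (β : ι → C(K, 𝕜))
    (q : (ι → 𝕜) [×m]→L[𝕜] H) : C(K, 𝕜) ⊗[𝕜] H :=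
  ∑ i : Fin m → ι, (f * ∏ l, β (i l)) ⊗ₜ q fun l => Pi.single (i l) 1

lemma tensorEval_polySubst (f : C(K, 𝕜)) (β : ι → C(K, 𝕜)) (q : (ι → 𝕜) [×m]→L[𝕜] H) (ξ : K) :
    tensorEval H ξ (polySubst f β q) = f ξ • q fun _ k => β k ξ := by
  have hq : (q fun _ k => β k ξ) =
      ∑ i : Fin m → ι, (∏ l, β (i l) ξ) • q fun l => Pi.single (i l) 1 := by
    simp only [← ContinuousMultilinearMap.map_smul_univ]
    exact (congrArg q (funext fun _ => pi_eq_sum_univ' fun k => β k ξ)).trans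
      (q.map_sum fun _ k => β k ξ • Pi.single k 1)
  simp [polySubst, hq, Finset.smul_sum, mul_smul, ContinuousMap.prod_apply]

lemma norm_operatorEval_polySubst_le [CompactSpace K] {f : C(K, 𝕜)} {β : ι → C(K, 𝕜)} {r : ℝ}
    (hr : 0 ≤ r) (hβ : ∀ ξ, f ξ ≠ 0 → ∀ k, ‖β k ξ‖ ≤ r) (q : (ι → 𝕜) [×m]→L[𝕜] H) :
    ‖operatorEval Ψ (polySubst f β q)‖ ≤
      ‖Ψ.toContinuousLinearMap‖ * ‖f‖ * (‖q‖ * (Fintype.card ι * r) ^ m) := by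
  have hf (i : Fin m → ι) : ‖f * ∏ l, β (i l)‖ ≤ ‖f‖ * r ^ m := by
    refine (ContinuousMap.norm_le _ (by positivity)).2 fun ξ => ?_
    obtain hξ | hξ := eq_or_ne (f ξ) 0
    · simp only [ContinuousMap.mul_apply, hξ, zero_mul, norm_zero]
      positivity
    · have hprod : ∏ l, ‖β (i l) ξ‖ ≤ ∏ _l : Fin m, r :=
        Finset.prod_le_prod (fun _ _ => norm_nonneg _) fun l _ => hβ ξ hξ (i l)
      simp only [ContinuousMap.mul_apply, ContinuousMap.prod_apply, norm_mul, norm_prod]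
      gcongr
      · exact f.norm_coe_le_norm ξ
      · simpa using hprod
  have hq (i : Fin m → ι) : ‖q fun l => Pi.single (i l) 1‖ ≤ ‖q‖ := by
    simpa [Pi.norm_single] using q.le_opNorm fun l => Pi.single (i l) 1
  have hterm (i : Fin m → ι) : ‖Ψ (f * ∏ l, β (i l)) (q fun l => Pi.single (i l) 1)‖ ≤
      ‖Ψ.toContinuousLinearMap‖ * (‖f‖ * r ^ m) * ‖q‖ :=
    ContinuousLinearMap.le_of_opNorm_le_of_le _
      (Ψ.toContinuousLinearMap.le_opNorm_of_le (hf i)) (hq i)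
  simp only [polySubst, map_sum, operatorEval_tmul]
  refine (norm_sum_le_of_le _ fun i _ => hterm i).trans_eq ?_
  simp only [Finset.sum_const, Finset.card_univ, Fintype.card_fun, Fintype.card_fin,
    nsmul_eq_mul, Nat.cast_pow, mul_pow]
  ring

lemma operatorEval_polySubst_relations {g : ι → (ι → 𝕜) → H}
    {p : ι → FormalMultilinearSeries 𝕜 (ι → 𝕜) H} {β : ι → C(K, 𝕜)} {y : H}
    (hp : ∀ k, HasFPowerSeriesAt (g k) (p k) 0)
    (hg : ∀ᶠ v in 𝓝 0, ∑ k, (v k • g k v - Ψ (β k) (g k v)) = y) (f : C(K, 𝕜)) :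
    ∑ k, Ψ (β k) (operatorEval Ψ (polySubst f β (p k 0))) = -Ψ f y ∧
      ∀ m, ∑ k, Ψ (β k) (operatorEval Ψ (polySubst f β (p k (m + 1)))) =
        ∑ k, Ψ (β k) (operatorEval Ψ (polySubst f β (p k m))) := by
  have hrel (ξ : K) := coeff_relations hp hg fun k => β k ξ
  have hzero : ∑ k, (Ψ (β k)).toLinearMap.lTensor _ (polySubst f β (p k 0)) = f ⊗ₜ (-y) := by
    refine eq_of_forall_tensorEval_eq fun ξ => ?_
    simp only [map_sum, tensorEval_lTensor, tensorEval_polySubst, tensorEval_tmul,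
      ContinuousLinearMap.coe_coe, map_smul, ← Finset.smul_sum, (hrel ξ).1]
  have hsucc (m : ℕ) : ∑ k, (Ψ (β k)).toLinearMap.lTensor _ (polySubst f β (p k (m + 1))) =
      ∑ k, β k • polySubst f β (p k m) := by
    refine eq_of_forall_tensorEval_eq fun ξ => ?_
    simp only [map_sum, tensorEval_lTensor, tensorEval_smul, tensorEval_polySubst,
      ContinuousLinearMap.coe_coe, map_smul, smul_comm (β _ ξ) (f ξ), ← Finset.smul_sum,
      (hrel ξ).2]
  constructor
  · simpa only [map_sum, map_neg, operatorEval_lTensor, operatorEval_tmul] using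
      congrArg (operatorEval Ψ) hzero
  · intro m
    simpa only [map_sum, operatorEval_lTensor, operatorEval_smul] using
      congrArg (operatorEval Ψ) (hsucc m)

end PolySubst

variable [CompactSpace K]

lemma apply_eq_zero_of_eventually_sum_eq {g : ι → (ι → 𝕜) → H}
    {p : ι → FormalMultilinearSeries 𝕜 (ι → 𝕜) H} {f : C(K, 𝕜)} {β : ι → C(K, 𝕜)} {y : H} {r : ℝ≥0}
    (hp : ∀ k, HasFPowerSeriesAt (g k) (p k) 0)
    (hg : ∀ᶠ v in 𝓝 0, ∑ k, (v k • g k v - Ψ (β k) (g k v)) = y)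
    (hr : ∀ k, ↑(Fintype.card ι * r) < (p k).radius)
    (hβ : ∀ ξ, f ξ ≠ 0 → ∀ k, ‖β k ξ‖ ≤ r) : Ψ f y = 0 := by
  classical
  obtain ⟨hzero, hsucc⟩ := operatorEval_polySubst_relations Ψ hp hg f
  have hconst (m : ℕ) : ∑ k, Ψ (β k) (operatorEval Ψ (polySubst f β (p k m))) = -Ψ f y := by
    induction m with
    | zero => exact hzero
    | succ m ih => rw [hsucc, ih]
  have hS (k : ι) : Tendsto (fun m => operatorEval Ψ (polySubst f β (p k m))) atTop (𝓝 0) := by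
    refine squeeze_zero_norm (fun m => norm_operatorEval_polySubst_le Ψ r.2 hβ (p k m)) ?_
    simpa using ((p k).summable_norm_mul_pow (hr k)).tendsto_atTop_zero.const_mul _
  have hlim : Tendsto (fun m => ∑ k, Ψ (β k) (operatorEval Ψ (polySubst f β (p k m)))) atTop
      (𝓝 0) := by
    simpa using tendsto_finsetSum _ fun k _ => ((Ψ (β k)).continuous.tendsto 0).comp (hS k)
  simp only [hconst] at hlim
  exact neg_eq_zero.1 (tendsto_nhds_unique tendsto_const_nhds hlim)

lemma exists_apply_ne_zero_and_map_apply_eq_zero {g : ι → (ι → 𝕜) → H} {b : ι → C(K, 𝕜)} {ζ : K}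
    {y : H} (hg : ∀ k, AnalyticAt 𝕜 (g k) fun k => b k ζ)
    (hy : ∀ᶠ μ in 𝓝 fun k => b k ζ, ∑ k, (μ k • g k μ - Ψ (b k) (g k μ)) = y) :
    ∃ f : C(K, 𝕜), f ζ ≠ 0 ∧ Ψ f y = 0 := by
  let μ₀ (k : ι) : 𝕜 := b k ζ
  let β (k : ι) : C(K, 𝕜) := b k - algebraMap 𝕜 C(K, 𝕜) (μ₀ k)
  have hΨβ (k : ι) (w : H) : Ψ (β k) w = Ψ (b k) w - μ₀ k • w := by
    simp [β, Algebra.algebraMap_eq_smul_one]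
  choose p hp using fun k => show AnalyticAt 𝕜 (g k) μ₀ from hg k
  have hp0 (k : ι) : HasFPowerSeriesAt (fun v => g k (v + μ₀)) (p k) 0 := by
    simpa only [sub_neg_eq_add, add_neg_cancel] using (hp k).comp_sub (-μ₀)
  have hy0 : ∀ᶠ v in 𝓝 0, ∑ k, (v k • g k (v + μ₀) - Ψ (β k) (g k (v + μ₀))) = y := by
    have htrans : Tendsto (fun v => v + μ₀) (𝓝 0) (𝓝 μ₀) :=
      Continuous.tendsto' (by fun_prop) _ _ (zero_add μ₀)
    filter_upwards [htrans.eventually hy] with v hv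
    simpa only [hΨβ, Pi.add_apply, add_smul, add_sub_assoc, sub_sub_eq_add_sub, add_comm] using hv
  have hsmall : ∀ᶠ r : ℝ≥0 in 𝓝[>] 0, ∀ k, ↑(Fintype.card ι * r) < (p k).radius := by
    refine eventually_all.2 fun k => nhdsWithin_le_nhds ?_
    have hcont : Continuous fun r : ℝ≥0 => (↑(Fintype.card ι * r) : ENNReal) := by fun_prop
    exact (hcont.tendsto' 0 0 (by simp)).eventually_lt_const (hp k).radius_pos
  obtain ⟨r, hr, hr0⟩ := (hsmall.and self_mem_nhdsWithin).exists
  obtain ⟨f, hf, hfβ⟩ := exists_continuousMap_ne_zero_and_imp_le (β := β) (ζ := ζ) hr0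
    fun k => sub_self (μ₀ k)
  exact ⟨f, hf, apply_eq_zero_of_eventually_sum_eq Ψ hp0 hy0 hr hfβ⟩

end Tensor

section FunctionalCalculus

lemma map_apply_eq_zero_of_forall_exists_ne_zero {𝕜 K H : Type*} [RCLike 𝕜]
    [TopologicalSpace K] [CompactSpace K] [T2Space K] [NormedAddCommGroup H] [NormedSpace 𝕜 H]
    (Ψ : C(K, 𝕜) →A[𝕜] (H →L[𝕜] H)) {φ : C(K, 𝕜)} {y : H}
    (h : ∀ ζ, φ ζ ≠ 0 → ∃ f : C(K, 𝕜), f ζ ≠ 0 ∧ Ψ f y = 0) : Ψ φ y = 0 := by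
  let I : Ideal C(K, 𝕜) := (Ideal.torsionOf (H →L[𝕜] H) H y).comap Ψ
  have hmem (f : C(K, 𝕜)) : f ∈ I ↔ Ψ f y = 0 := Iff.rfl
  have hclosed : IsClosed (I : Set C(K, 𝕜)) :=
    isClosed_eq (f := fun f => Ψ f y) (by fun_prop) continuous_const
  rw [← hmem, ← ContinuousMap.idealOfSet_ofIdeal_isClosed hclosed, ContinuousMap.mem_idealOfSet]
  intro ζ hζ
  by_contra hφ
  obtain ⟨f, hf, hfy⟩ := h ζ hφ
  exact hζ (ContinuousMap.mem_setOfIdeal.2 ⟨f, hfy, hf⟩)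

lemma summable_smul_pow {𝕜 A : Type*} [NormedField 𝕜] [NormedRing A] [NormedAlgebra 𝕜 A]
    [CompleteSpace A] {a : ℕ → 𝕜} {b : A} {M : ℝ} (ha : Summable fun m => ‖a m‖)
    (hb : ∀ m, ‖b ^ m‖ ≤ M) : Summable fun m => a m • b ^ m :=
  .of_norm_bounded (ha.mul_right M) fun m =>
    (norm_smul _ _).trans_le (mul_le_mul_of_nonneg_left (hb m) (norm_nonneg _))

lemma semiconj_tsum_smul_pow {𝕜 X Y : Type*} [NontriviallyNormedField 𝕜]
    [NormedAddCommGroup X] [NormedSpace 𝕜 X] [NormedAddCommGroup Y] [NormedSpace 𝕜 Y]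
    {Q : X →L[𝕜] Y} {T : X →L[𝕜] X} {U : Y →L[𝕜] Y} {a : ℕ → 𝕜} (hQ : Function.Semiconj Q T U)
    (hT : Summable fun m => a m • T ^ m) (hU : Summable fun m => a m • U ^ m) :
    Function.Semiconj Q (∑' m, a m • T ^ m : X →L[𝕜] X) (∑' m, a m • U ^ m : Y →L[𝕜] Y) := by
  intro x
  have hpow (m : ℕ) : Q ((T ^ m) x) = (U ^ m) (Q x) := by
    simpa only [FunLike.coe_pow_eq_iterate] using hQ.iterate_right m x
  have hleft := (Q.comp (ContinuousLinearMap.apply 𝕜 X x)).hasSum hT.hasSum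
  have hright := (ContinuousLinearMap.apply 𝕜 Y (Q x)).hasSum hU.hasSum
  refine hleft.unique (hright.congr_fun fun m => ?_)
  simp only [ContinuousLinearMap.comp_apply, ContinuousLinearMap.apply_apply, map_smul, hpow]

lemma LocallyRegular.map {X Y : Type*} [NormedAddCommGroup X] [NormedSpace ℂ X] [CompleteSpace X]
    [NormedAddCommGroup Y] [NormedSpace ℂ Y] [CompleteSpace Y] {T : X →L[ℂ] X} {U : Y →L[ℂ] Y}
    {M N : ℝ} (hT : ∀ m, ‖T ^ m‖ ≤ M) (hU : ∀ m, ‖U ^ m‖ ≤ N) {Q : X →L[ℂ] Y}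
    (hQ : Function.Semiconj Q T U) {x : X} {lam : ℂ} (h : LocallyRegular T x lam) :
    LocallyRegular U (Q x) lam := by
  obtain ⟨n, a, ha, Ω, hΩ, hlam, g, hg, hgx⟩ := h
  refine ⟨n, a, ha, Ω, hΩ, hlam, fun k μ => Q (g k μ), fun k => Q.comp_analyticOnNhd (hg k),
    fun μ hμ => ?_⟩
  have hcalc (k : Fin n) := semiconj_tsum_smul_pow hQ (summable_smul_pow (ha k) hT)
    (summable_smul_pow (ha k) hU)
  simp only [← hgx μ hμ, map_sum, map_sub, map_smul, (hcalc _).eq]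

lemma tsum_smul_pow_map_apply_eq_zero {K H : Type*} [TopologicalSpace K] [CompactSpace K]
    [T2Space K] [NormedAddCommGroup H] [NormedSpace ℂ H] [CompleteSpace H]
    (Ψ : C(K, ℂ) →A[ℂ] (H →L[ℂ] H)) {z : C(K, ℂ)} (hz : ∀ ζ, ‖z ζ‖ ≤ 1) {a : ℕ → ℂ}
    (ha : Summable fun m => ‖a m‖) {y : H}
    (h : ∀ ζ, ¬ LocallyRegular (Ψ z) y (z ζ) → ∑' m, a m * z ζ ^ m = 0) :
    (∑' m, a m • Ψ z ^ m) y = 0 := by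
  have hpow (m : ℕ) : ‖z ^ m‖ ≤ 1 := (ContinuousMap.norm_le _ zero_le_one).2 fun ζ => by
    simpa only [ContinuousMap.pow_apply, norm_pow] using pow_le_one₀ (norm_nonneg _) (hz ζ)
  have hsum {c : ℕ → ℂ} (hc : Summable fun m => ‖c m‖) : Summable fun m => c m • z ^ m :=
    summable_smul_pow hc hpow
  have hmap {c : ℕ → ℂ} (hc : Summable fun m => ‖c m‖) :
      ∑' m, c m • Ψ z ^ m = Ψ (∑' m, c m • z ^ m) := by
    simpa using (Ψ.toContinuousLinearMap.map_tsum (hsum hc)).symm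
  have heval {c : ℕ → ℂ} (hc : Summable fun m => ‖c m‖) (ζ : K) :
      ∑' m, c m * z ζ ^ m = (∑' m, c m • z ^ m) ζ := by
    simpa using ContinuousMap.tsum_apply (hsum hc) ζ
  rw [hmap ha]
  refine map_apply_eq_zero_of_forall_exists_ne_zero Ψ fun ζ hζ => ?_
  rw [← heval ha] at hζ
  obtain ⟨n, c, hc, Ω, hΩ, hmem, g, hg, hgy⟩ := not_not.1 (mt (h ζ) hζ)
  simp only [heval (hc _)] at hmem
  refine exists_apply_ne_zero_and_map_apply_eq_zero Ψ (fun k => hg k _ hmem) ?_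
  filter_upwards [hΩ.mem_nhds hmem] with μ hμ
  simpa only [hmap (hc _)] using hgy μ hμ

lemma norm_pow_le_one_of_mem_unitary {𝕜 H : Type*} [RCLike 𝕜] [NormedAddCommGroup H]
    [InnerProductSpace 𝕜 H] [CompleteSpace H] {U : H →L[𝕜] H} (hU : U ∈ unitary (H →L[𝕜] H))
    (m : ℕ) : ‖U ^ m‖ ≤ 1 :=
  (U ^ m).opNorm_le_bound zero_le_one fun y =>
    (U ^ m).norm_map_of_mem_unitary (pow_mem hU m) y |>.trans_le (one_mul ‖y‖).ge

lemma tsum_smul_pow_apply_eq_zero_of_mem_unitary {H : Type*} [NormedAddCommGroup H]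
    [InnerProductSpace ℂ H] [CompleteSpace H] {U : H →L[ℂ] H} (hU : U ∈ unitary (H →L[ℂ] H))
    {a : ℕ → ℂ} (ha : Summable fun m => ‖a m‖) {y : H}
    (h : ∀ lam : ℂ, ‖lam‖ = 1 → ¬ LocallyRegular U y lam → ∑' m, a m * lam ^ m = 0) :
    (∑' m, a m • U ^ m) y = 0 := by
  have hnormal : IsStarNormal U := isStarNormal_of_mem_unitary hU
  have hcircle (ζ : spectrum ℂ U) : ‖(ζ : ℂ)‖ = 1 := by
    simpa using spectrum.subset_circle_of_unitary hU ζ.2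
  let Ψ : C(spectrum ℂ U, ℂ) →A[ℂ] (H →L[ℂ] H) :=
    { (cfcHom hnormal).toAlgHom with cont := cfcHom_continuous hnormal }
  let z : C(spectrum ℂ U, ℂ) := .restrict (spectrum ℂ U) (.id ℂ)
  have hz : Ψ z = U := cfcHom_id hnormal
  simp only [← hz] at h ⊢
  exact tsum_smul_pow_map_apply_eq_zero Ψ (fun ζ => (hcircle ζ).le) ha fun ζ => h ζ (hcircle ζ)

end FunctionalCalculus

/-- ℤ₊-instance of Theorem 5.1: if `T` is power-bounded on a complex Hilbert space,
`x ∈ X`, `a ∈ ℓ¹(ℕ)`, and `â(λ) = 0` for every `λ` in the unitary local spectrum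
`Spu(T;x)` (the set of `λ ∈ 𝕋` which are not locally regular at `x`), then
`‖Tⁿ â(T) x‖ → 0`. -/
theorem stmt_15 {X : Type*} [NormedAddCommGroup X] [InnerProductSpace ℂ X] [CompleteSpace X]
    (T : X →L[ℂ] X) (hT : ∃ M : ℝ, ∀ n : ℕ, ‖T ^ n‖ ≤ M)
    (x : X) (a : ℕ → ℂ) (ha : Summable fun n : ℕ => ‖a n‖)
    (h : ∀ lam : ℂ, ‖lam‖ = 1 → ¬ LocallyRegular T x lam → (∑' m : ℕ, a m * lam ^ m) = 0) :
    Tendsto (fun n : ℕ => ‖(T ^ n) ((∑' m : ℕ, a m • T ^ m) x)‖) atTop (nhds 0) := by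
  obtain ⟨M, hM⟩ := hT
  let U := (CesaroSpace.unitaryShift ℂ X).1
  let Q := CesaroSpace.completionOrbit hM
  have hU : U ∈ unitary _ := (CesaroSpace.unitaryShift ℂ X).2
  have hUpow (m : ℕ) : ‖U ^ m‖ ≤ 1 := norm_pow_le_one_of_mem_unitary hU m
  have hQ : Function.Semiconj Q T U := CesaroSpace.semiconj_completionOrbit hM
  have hzero : (∑' m, a m • U ^ m) (Q x) = 0 :=
    tsum_smul_pow_apply_eq_zero_of_mem_unitary hU ha fun lam hlam hreg =>
      h lam hlam (mt (LocallyRegular.map hM hUpow hQ) hreg)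
  have hQa : Q ((∑' m, a m • T ^ m) x) = (∑' m, a m • U ^ m) (Q x) :=
    semiconj_tsum_smul_pow hQ (summable_smul_pow ha hM) (summable_smul_pow ha hUpow) x
  exact CesaroSpace.tendsto_norm_pow_apply_of_completionOrbit_eq_zero hM (hQa.trans hzero)
end
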